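/- Let n ≥ 1, let 1 ≤ k ≤ n, and let f ∈ Q₀ⁿ. Then ∫_{O(n)} ( ∫_{H₀ᵏ} f(g·y) dλ_k(y) )^n dν(g) ≤ (ω_k^n / ω_n^k) · ‖f‖₁^k · ‖f‖_∞^{n−k}, where ν is the Haar probability measure on the orthogonal group O(n), H₀ᵏ = span(e₁,…,e_k), and λ_k is Lebesgue measure on H₀ᵏ. (This is the functional analog of Grinberg's inequality: the left-hand side equals the average over the Grassmannian G_{n,k}, with its rotation-invariant probability measure, of ‖S_H f‖_{L¹(H)}^n.) -/

import Mathlib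

open MeasureTheory

noncomputable section

/-- `ℝⁿ` with its Euclidean structure. -/
abbrev Eucl (n : ℕ) := EuclideanSpace ℝ (Fin n)

/-- `f : ℝⁿ → [0,∞)` is log-concave:
`f(tx+(1−t)y) ≥ f(x)^t · f(y)^(1−t)` for all `x, y` and `t ∈ (0,1)`. -/
def IsLogConcave {n : ℕ} (f : Eucl n → ℝ) : Prop :=
  ∀ x y : Eucl n, ∀ t : ℝ, 0 < t → t < 1 →
    f x ^ t * f y ^ (1 - t) ≤ f (t • x + (1 - t) • y)

/-- The class `Q₀ⁿ`: nonnegative, log-concave, upper semicontinuous, integrable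
functions with positive integral. -/
def MemQ0 {n : ℕ} (f : Eucl n → ℝ) : Prop :=
  (∀ x, 0 ≤ f x) ∧ IsLogConcave f ∧ UpperSemicontinuous f ∧
    Integrable f ∧ 0 < ∫ x, f x

/-- `‖f‖_∞ = sup f`. -/
def supNorm {n : ℕ} (f : Eucl n → ℝ) : ℝ := ⨆ x, f x

/-- `‖f‖_p = (∫ f^p)^(1/p)`. -/
def lpNorm {n : ℕ} (p : ℝ) (f : Eucl n → ℝ) : ℝ := (∫ x, f x ^ p) ^ (1 / p)

/-- `‖P_H f‖_{L¹(H)} = ∫_H sup_{z ∈ H⊥} f(y+z) dλ_H(y)`, the `L¹(H)`-norm of the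
projection of `f` onto the subspace `H` (with the Lebesgue measure on `H` induced
by the Euclidean structure). -/
def projL1 {n : ℕ} (f : Eucl n → ℝ) (H : Submodule ℝ (Eucl n)) : ℝ :=
  ∫ y : H, ⨆ z : Hᗮ, f ((y : Eucl n) + (z : Eucl n))

/-- `‖S_H f‖_{L¹(H)} = ∫_H f dλ_H`, the integral of the section `f|_H`. -/
def sectL1 {n : ℕ} (f : Eucl n → ℝ) (H : Submodule ℝ (Eucl n)) : ℝ :=
  ∫ y : H, f (y : Eucl n)

/-- The orthogonal group `O(n)` acting on `ℝⁿ`. -/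
abbrev OG (n : ℕ) := Matrix.orthogonalGroup (Fin n) ℝ

instance (n : ℕ) : MeasurableSpace (OG n) := borel _

/-- The volume `ω_d` of the Euclidean unit ball in `ℝ^d`. -/
def ballVol (d : ℕ) : ℝ := (volume (Metric.closedBall (0 : Eucl d) 1)).toReal

/-- The coordinate subspace `H₀ᵏ = span(e₁, …, e_k)` of `ℝⁿ`. -/
def stdSubspace (n k : ℕ) : Submodule ℝ (Eucl n) :=
  Submodule.span ℝ {v | ∃ i : Fin n, (i : ℕ) < k ∧ v = EuclideanSpace.single i 1}


section PartA
open MeasureTheory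
open scoped ENNReal NNReal

noncomputable section

lemma lintegral_pi_prod {X : Type*} [MeasurableSpace X] (μ : Measure X) [SigmaFinite μ] :
    ∀ (k : ℕ) (g : Fin k → X → ℝ≥0∞), (∀ i, Measurable (g i)) →
    ∫⁻ x, ∏ i, g i (x i) ∂(Measure.pi fun _ : Fin k => μ) = ∏ i, ∫⁻ x, g i x ∂μ := by
  intro k
  induction k with
  | zero => intro g hg; simp
  | succ k ih =>
    intro g hg
    have h := (measurePreserving_piFinSuccAbove (fun _ : Fin (k+1) => μ) 0).symm
    rw [← h.lintegral_comp (by fun_prop)]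
    rw [lintegral_prod _ (by fun_prop)]
    simp only [Fin.prod_univ_succ]
    simp only [MeasurableEquiv.piFinSuccAbove_symm_apply, Fin.insertNthEquiv_zero, Fin.consEquiv_apply,
      Fin.cons_zero, Fin.cons_succ]
    rw [← ih (fun i => g i.succ) (fun i => hg _)]
    rw [← lintegral_mul_const _ (hg 0)]
    refine lintegral_congr fun x => ?_
    rw [lintegral_const_mul _ (by fun_prop)]

lemma pi_withDensity {X : Type*} [MeasurableSpace X] (μ : Measure X) [SigmaFinite μ]
    (k : ℕ) (g : Fin k → X → ℝ≥0∞) (hg : ∀ i, Measurable (g i)) (hfin : ∀ i x, g i x ≠ ∞) :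
    (Measure.pi fun i : Fin k => μ.withDensity (g i)) =
      (Measure.pi fun _ : Fin k => μ).withDensity (fun x => ∏ i, g i (x i)) := by
  have : ∀ i, SigmaFinite (μ.withDensity (g i)) := fun i =>
    SigmaFinite.withDensity_of_ne_top (Filter.Eventually.of_forall (hfin i))
  apply Measure.pi_eq
  intro s hs
  rw [withDensity_apply _ (MeasurableSet.univ_pi hs), ← lintegral_indicator (MeasurableSet.univ_pi hs)]
  have : ∀ x : Fin k → X, (Set.univ.pi s).indicator (fun x => ∏ i, g i (x i)) x =
      ∏ i, (s i).indicator (g i) (x i) := by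
    intro x
    by_cases hx : x ∈ Set.univ.pi s
    · rw [Set.indicator_of_mem hx]
      refine Finset.prod_congr rfl fun i _ => ?_
      rw [Set.indicator_of_mem (hx i trivial)]
    · rw [Set.indicator_of_notMem hx]
      simp only [Set.mem_pi, Set.mem_univ, true_implies, not_forall] at hx
      obtain ⟨i, hi⟩ := hx
      symm
      apply Finset.prod_eq_zero (Finset.mem_univ i)
      rw [Set.indicator_of_notMem hi]
  simp_rw [this]
  rw [lintegral_pi_prod _ _ _ (fun i => (hg i).indicator (hs i))]
  refine Finset.prod_congr rfl fun i _ => ?_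
  rw [withDensity_apply _ (hs i), lintegral_indicator (hs i)]

/-- tensorization of the convex order -/
lemma convex_order_pi : ∀ (k : ℕ) (F : (Fin k → ℝ) → ℝ), ConvexOn ℝ Set.univ F →
    (∀ x, 0 ≤ F x) → ∀ (μ ν : Fin k → Measure ℝ) [∀ i, SigmaFinite (μ i)]
    [∀ i, SigmaFinite (ν i)],
    (∀ i, ∀ φ : ℝ → ℝ, ConvexOn ℝ Set.univ φ → (∀ x, 0 ≤ φ x) →
      ∫⁻ t, ENNReal.ofReal (φ t) ∂(ν i) ≤ ∫⁻ t, ENNReal.ofReal (φ t) ∂(μ i)) →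
    ∫⁻ x, ENNReal.ofReal (F x) ∂(Measure.pi ν) ≤ ∫⁻ x, ENNReal.ofReal (F x) ∂(Measure.pi μ) := by
  intro k
  induction k with
  | zero =>
    intro F hF h0 μ ν _ _ h
    have : μ = ν := Subsingleton.elim _ _
    subst this
    exact le_of_eq (by rw [Measure.pi_of_empty])
  | succ k ih =>
    intro F hF h0 μ ν _ _ h
    have hFc : Continuous F := by
      rw [← continuousOn_univ]; exact hF.continuousOn isOpen_univ
    have hμ := (measurePreserving_piFinSuccAbove μ 0).symm
    have hν := (measurePreserving_piFinSuccAbove ν 0).symm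
    rw [← hμ.lintegral_comp (by fun_prop), ← hν.lintegral_comp (by fun_prop)]
    have hFm : Measurable fun a : ℝ × (Fin k → ℝ) =>
        ENNReal.ofReal (F ((MeasurableEquiv.piFinSuccAbove (fun _ => ℝ) 0).symm a)) := by fun_prop
    have e : ∀ a : ℝ, ∀ b : Fin k → ℝ, (MeasurableEquiv.piFinSuccAbove (fun _ => ℝ) 0).symm (a, b)
      = Fin.cons a b := by
      intro a b
      simp [MeasurableEquiv.piFinSuccAbove_symm_apply]
      rfl
    calc _ = ∫⁻ a, ∫⁻ b, ENNReal.ofReal (F (Fin.cons a b)) ∂(Measure.pi fun j : Fin k => ν j.succ) ∂(ν 0) := by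
          rw [lintegral_prod _ hFm.aemeasurable]
          simp only [e]; rfl
      _ ≤ ∫⁻ a, ∫⁻ b, ENNReal.ofReal (F (Fin.cons a b)) ∂(Measure.pi fun j : Fin k => μ j.succ) ∂(ν 0) := by
          refine lintegral_mono fun a => ?_
          refine ih (fun b => F (Fin.cons a b)) ?_ (fun b => h0 _) _ _ (fun i => h i.succ)
          refine ⟨convex_univ, fun x _ y _ s t hs ht hst => ?_⟩
          have := hF.2 (Set.mem_univ (Fin.cons a x : Fin (k+1) → ℝ)) (Set.mem_univ (Fin.cons a y)) hs ht hst
          convert this using 2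
          ext i
          refine Fin.cases ?_ (fun i => ?_) i
          · simp [← add_mul, hst]
          · simp
      _ = ∫⁻ b, ∫⁻ a, ENNReal.ofReal (F (Fin.cons a b)) ∂(ν 0) ∂(Measure.pi fun j : Fin k => μ j.succ) := by
          apply lintegral_lintegral_swap
          apply Measurable.aemeasurable
          convert hFm with a
          obtain ⟨a, b⟩ := a
          simp [Function.uncurry, e]
      _ ≤ ∫⁻ b, ∫⁻ a, ENNReal.ofReal (F (Fin.cons a b)) ∂(μ 0) ∂(Measure.pi fun j : Fin k => μ j.succ) := by
          refine lintegral_mono fun b => ?_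
          refine h 0 (fun a => F (Fin.cons a b)) ?_ (fun b => h0 _)
          refine ⟨convex_univ, fun x _ y _ s t hs ht hst => ?_⟩
          have := hF.2 (Set.mem_univ (Fin.cons x b : Fin (k+1) → ℝ)) (Set.mem_univ (Fin.cons y b)) hs ht hst
          convert this using 2
          ext i
          refine Fin.cases ?_ (fun i => ?_) i
          · simp
          · simp [← add_mul, hst]
      _ = _ := by
          rw [lintegral_prod_symm _ hFm.aemeasurable]
          simp only [e]; rfl

/-- one-dimensional bathtub with fixed mean -/
lemma convex_order_one (g : ℝ → ℝ≥0∞) (hg : Measurable g) (hg1 : ∀ t, g t ≤ 1) (ℓ : ℝ)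
    (hℓ : ∫⁻ t, g t = ENNReal.ofReal ℓ) (hℓ0 : 0 ≤ ℓ)
    (hm : ∫⁻ t, g t * ENNReal.ofReal |t| ≠ ∞) :
    ∃ a : ℝ, ∀ φ : ℝ → ℝ, ConvexOn ℝ Set.univ φ → (∀ x, 0 ≤ φ x) →
      ∫⁻ t in Set.Icc (a - ℓ/2) (a + ℓ/2), ENNReal.ofReal (φ t) ≤
        ∫⁻ t, ENNReal.ofReal (φ t) ∂(volume.withDensity g) := by
  rcases hℓ0.eq_or_lt with h0 | hpos
  · refine ⟨0, fun φ _ _ => ?_⟩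
    subst h0
    simp
  set γ : ℝ → ℝ := fun t => (g t).toReal with hγ
  have hgfin : ∀ t, g t ≠ ∞ := fun t => ne_top_of_le_ne_top ENNReal.one_ne_top (hg1 t)
  have hγm : Measurable γ := hg.ennreal_toReal
  have hγ0 : ∀ t, 0 ≤ γ t := fun t => ENNReal.toReal_nonneg
  have hγ1 : ∀ t, γ t ≤ 1 := fun t => by
    have := ENNReal.toReal_mono ENNReal.one_ne_top (hg1 t); simpa using this
  have hgγ : ∀ t, g t = ENNReal.ofReal (γ t) := fun t => (ENNReal.ofReal_toReal (hgfin t)).symm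
  have hγi : Integrable γ := by
    refine ⟨hγm.aestronglyMeasurable, ?_⟩
    rw [hasFiniteIntegral_iff_ofReal (Filter.Eventually.of_forall hγ0)]
    simp_rw [← hgγ, hℓ]; exact ENNReal.ofReal_lt_top
  have hγI : ∫ t, γ t = ℓ := by
    rw [integral_eq_lintegral_of_nonneg_ae (Filter.Eventually.of_forall hγ0) hγm.aestronglyMeasurable]
    simp_rw [← hgγ, hℓ]; exact ENNReal.toReal_ofReal hℓ0
  have hγti : Integrable (fun t => γ t * t) := by
    refine ⟨by fun_prop, ?_⟩
    rw [hasFiniteIntegral_iff_enorm]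
    refine lt_of_le_of_lt (le_of_eq ?_) (lt_top_iff_ne_top.2 hm)
    refine lintegral_congr fun t => ?_
    rw [enorm_mul, hgγ, Real.enorm_eq_ofReal (hγ0 t), Real.enorm_eq_ofReal_abs]
  set a := (∫ t, γ t * t) / ℓ with ha
  refine ⟨a, fun φ hφ hφ0 => ?_⟩
  have hφc : Continuous φ := by
    rw [← continuousOn_univ]; exact hφ.continuousOn isOpen_univ
  by_cases htop : ∫⁻ t, ENNReal.ofReal (φ t) ∂(volume.withDensity g) = ∞
  · rw [htop]; exact le_top
  rw [lintegral_withDensity_eq_lintegral_mul _ hg (by fun_prop)] at htop ⊢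
  have hgφ : ∀ t, (g * fun t => ENNReal.ofReal (φ t)) t = ENNReal.ofReal (γ t * φ t) := by
    intro t
    rw [Pi.mul_apply, hgγ, ENNReal.ofReal_mul (hγ0 t)]
  simp_rw [hgφ] at htop ⊢
  have hγφi : Integrable (fun t => γ t * φ t) := by
    refine ⟨by fun_prop, ?_⟩
    rw [hasFiniteIntegral_iff_ofReal (Filter.Eventually.of_forall fun t => mul_nonneg (hγ0 t) (hφ0 t))]
    exact lt_top_iff_ne_top.2 htop
  set I := Set.Icc (a - ℓ/2) (a + ℓ/2) with hI
  have hφI : IntegrableOn φ I := hφc.integrableOn_Icc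
  rw [← ofReal_integral_eq_lintegral_ofReal hφI (Filter.Eventually.of_forall fun t => hφ0 t),
    ← ofReal_integral_eq_lintegral_ofReal hγφi (Filter.Eventually.of_forall fun t => mul_nonneg (hγ0 t) (hφ0 t))]
  apply ENNReal.ofReal_le_ofReal
  -- the chord
  set p := a - ℓ/2 with hp
  set q := a + ℓ/2 with hq
  have hpq : p < q := by simp only [hp, hq]; linarith
  set sl := (φ q - φ p) / (q - p) with hsl
  set b := φ p - sl * p with hb
  have hin : ∀ t ∈ I, φ t ≤ sl * t + b := by
    intro t ht
    have := hφ.2 (Set.mem_univ p) (Set.mem_univ q)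
      (show 0 ≤ (q - t)/(q-p) from div_nonneg (by linarith [ht.2]) (by linarith))
      (show 0 ≤ (t-p)/(q-p) from div_nonneg (by linarith [ht.1]) (by linarith))
      (by have : q - p ≠ 0 := by linarith
          field_simp; ring)
    have e1 : ((q - t)/(q-p)) • p + ((t-p)/(q-p)) • q = t := by
      have : q - p ≠ 0 := by linarith
      simp only [smul_eq_mul]; field_simp; ring
    rw [e1] at this
    refine this.trans (le_of_eq ?_)
    have : q - p ≠ 0 := by linarith
    simp only [smul_eq_mul, hb, hsl]; field_simp; ring
  have hout : ∀ t ∉ I, sl * t + b ≤ φ t := by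
    intro t ht
    have hqp : 0 < q - p := by linarith
    rw [hI, Set.mem_Icc, not_and_or, not_le, not_le] at ht
    rcases ht with ht | ht
    · have := hφ.slope_mono_adjacent (Set.mem_univ t) (Set.mem_univ q) ht hpq
      rw [div_le_iff₀ (by linarith)] at this
      simp only [hb, hsl]; linarith
    · have := hφ.slope_mono_adjacent (Set.mem_univ p) (Set.mem_univ t) hpq ht
      rw [le_div_iff₀ (by linarith)] at this
      have e : (φ q - φ p) / (q - p) * (q - p) = φ q - φ p := by field_simp
      simp only [hb, hsl]; linarith
  have hLγi : Integrable (fun t => γ t * (sl * t + b)) := by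
    have := (hγti.const_mul sl).add (hγi.const_mul b)
    refine this.congr (Filter.Eventually.of_forall fun t => ?_)
    simp; ring
  have hLγ : ∫ t, γ t * (sl * t + b) = (sl * a + b) * ℓ := by
    have : ∀ t, γ t * (sl * t + b) = sl * (γ t * t) + b * γ t := fun t => by ring
    simp_rw [this]
    rw [integral_add (hγti.const_mul sl) (hγi.const_mul b), integral_const_mul, integral_const_mul, hγI, ha]
    field_simp
  have hLI : ∫ t in I, (sl * t + b) = (sl * a + b) * ℓ := by
    rw [hI, integral_Icc_eq_integral_Ioc, ← intervalIntegral.integral_of_le hpq.le,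
      intervalIntegral.integral_add (by apply Continuous.intervalIntegrable; fun_prop) (by simp),
      intervalIntegral.integral_const_mul]
    simp only [integral_id, intervalIntegral.integral_const, smul_eq_mul, hp, hq]
    ring
  have hIi : ∀ ψ : ℝ → ℝ, Continuous ψ → Integrable (I.indicator ψ) := fun ψ hψ =>
    (integrable_indicator_iff measurableSet_Icc).2 hψ.integrableOn_Icc
  have key : ∫ t, (I.indicator φ t - I.indicator (fun t => sl * t + b) t) ≤
      ∫ t, (γ t * φ t - γ t * (sl * t + b)) := by
    apply integral_mono ((hIi _ hφc).sub (hIi _ (by fun_prop))) (hγφi.sub hLγi)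
    intro t
    by_cases ht : t ∈ I
    · simp only [Pi.sub_apply, Set.indicator_of_mem ht]
      nlinarith [hin t ht, hγ1 t]
    · simp only [Pi.sub_apply, Set.indicator_of_notMem ht]
      nlinarith [hout t ht, hγ0 t]
  rw [integral_sub (hIi _ hφc) (hIi _ (by fun_prop)), integral_sub hγφi hLγi,
    integral_indicator measurableSet_Icc, integral_indicator measurableSet_Icc, hLγ, hLI] at key
  linarith

/-- The rearrangement inequality on lines. -/
lemma line_ineq (k : ℕ) (F : (Fin k → ℝ) → ℝ) (hF : ConvexOn ℝ Set.univ F)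
    (h0 : ∀ x, 0 ≤ F x) (heven : ∀ x, F (-x) = F x)
    (g : Fin k → ℝ → ℝ≥0∞) (hg : ∀ i, Measurable (g i)) (hg1 : ∀ i t, g i t ≤ 1) (ℓ : Fin k → ℝ)
    (hℓ : ∀ i, ∫⁻ t, g i t = ENNReal.ofReal (ℓ i)) (hℓ0 : ∀ i, 0 ≤ ℓ i)
    (hm : ∀ i, ∫⁻ t, g i t * ENNReal.ofReal |t| ≠ ∞) :
    ∫⁻ t : Fin k → ℝ, (∏ i, Set.indicator (Set.Icc (-(ℓ i/2)) (ℓ i/2)) 1 (t i)) * ENNReal.ofReal (F t) ≤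
      ∫⁻ t : Fin k → ℝ, (∏ i, g i (t i)) * ENNReal.ofReal (F t) := by
  have hFc : Continuous F := by
    rw [← continuousOn_univ]; exact hF.continuousOn isOpen_univ
  have hgfin : ∀ i t, g i t ≠ ∞ := fun i t => ne_top_of_le_ne_top ENNReal.one_ne_top (hg1 i t)
  have : ∀ i, SigmaFinite ((volume : Measure ℝ).withDensity (g i)) := fun i =>
    SigmaFinite.withDensity_of_ne_top (Filter.Eventually.of_forall (hgfin i))
  choose a ha using fun i => convex_order_one (g i) (hg i) (hg1 i) (ℓ i) (hℓ i) (hℓ0 i) (hm i)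
  have step1 := convex_order_pi k F hF h0 (fun i => (volume : Measure ℝ).withDensity (g i))
    (fun i => (volume : Measure ℝ).restrict (Set.Icc (a i - ℓ i/2) (a i + ℓ i/2))) ha
  rw [pi_withDensity _ _ _ hg hgfin, lintegral_withDensity_eq_lintegral_mul _
    (by fun_prop) (by fun_prop)] at step1
  refine le_trans ?_ step1
  set B0 : Set (Fin k → ℝ) := Set.univ.pi fun i => Set.Icc (-(ℓ i/2)) (ℓ i/2) with hB0
  have hB0m : MeasurableSet B0 := MeasurableSet.univ_pi fun i => measurableSet_Icc
  have e0 : ∀ t : Fin k → ℝ, (∏ i, Set.indicator (Set.Icc (-(ℓ i/2)) (ℓ i/2)) (1 : ℝ → ℝ≥0∞) (t i)) * ENNReal.ofReal (F t)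
      = B0.indicator (fun t => ENNReal.ofReal (F t)) t := by
    intro t
    by_cases ht : t ∈ B0
    · rw [Set.indicator_of_mem ht, Finset.prod_eq_one, one_mul]
      intro i _
      rw [Set.indicator_of_mem (ht i trivial)]; rfl
    · rw [Set.indicator_of_notMem ht]
      simp only [hB0, Set.mem_pi, Set.mem_univ, true_implies, not_forall] at ht
      obtain ⟨i, hi⟩ := ht
      rw [Finset.prod_eq_zero (Finset.mem_univ i), zero_mul]
      rw [Set.indicator_of_notMem hi]
  simp_rw [e0]
  rw [← Measure.restrict_pi_pi, ← lintegral_indicator (MeasurableSet.univ_pi fun i => measurableSet_Icc)]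
  -- translate
  have e1 : ∫⁻ t : Fin k → ℝ, (Set.univ.pi fun i => Set.Icc (a i - ℓ i/2) (a i + ℓ i/2)).indicator
      (fun t => ENNReal.ofReal (F t)) t = ∫⁻ t : Fin k → ℝ, B0.indicator (fun t => ENNReal.ofReal (F (t + a))) t := by
    rw [← lintegral_add_right_eq_self _ a]
    refine lintegral_congr fun t => ?_
    have : (t + a ∈ (Set.univ.pi fun i => Set.Icc (a i - ℓ i/2) (a i + ℓ i/2))) ↔ t ∈ B0 := by
      simp only [hB0, Set.mem_pi, Set.mem_univ, true_implies, Set.mem_Icc, Pi.add_apply]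
      refine forall_congr' fun i => ?_
      constructor
      · rintro ⟨h1, h2⟩; constructor <;> linarith
      · rintro ⟨h1, h2⟩; constructor <;> linarith
    by_cases ht : t ∈ B0
    · rw [Set.indicator_of_mem ht, Set.indicator_of_mem (this.2 ht)]
    · rw [Set.indicator_of_notMem ht, Set.indicator_of_notMem (fun h => ht (this.1 h))]
  have e2 : ∫⁻ t : Fin k → ℝ, B0.indicator (fun t => ENNReal.ofReal (F (t + a))) t =
      ∫⁻ t : Fin k → ℝ, B0.indicator (fun t => ENNReal.ofReal (F (t - a))) t := by
    rw [← lintegral_neg_eq_self]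
    refine lintegral_congr fun t => ?_
    have : (-t ∈ B0) ↔ t ∈ B0 := by
      simp only [hB0, Set.mem_pi, Set.mem_univ, true_implies, Set.mem_Icc, Pi.neg_apply]
      refine forall_congr' fun i => ?_
      constructor
      · rintro ⟨h1, h2⟩; constructor <;> linarith
      · rintro ⟨h1, h2⟩; constructor <;> linarith
    by_cases ht : t ∈ B0
    · rw [Set.indicator_of_mem ht, Set.indicator_of_mem (this.2 ht)]
      rw [← heven]; congr 2; abel
    · rw [Set.indicator_of_notMem ht, Set.indicator_of_notMem (fun h => ht (this.1 h))]
  change _ ≤ ∫⁻ t : Fin k → ℝ, (Set.univ.pi fun i => Set.Icc (a i - ℓ i/2) (a i + ℓ i/2)).indicator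
      (fun t => ENNReal.ofReal (F t)) t
  rw [e1]
  have e3 : 2 * ∫⁻ t : Fin k → ℝ, B0.indicator (fun t => ENNReal.ofReal (F t)) t ≤
      2 * ∫⁻ t : Fin k → ℝ, B0.indicator (fun t => ENNReal.ofReal (F (t + a))) t := by
    conv_rhs => rw [two_mul]
    nth_rewrite 2 [e2]
    rw [← lintegral_add_left (Measurable.indicator (by fun_prop) hB0m), ← lintegral_const_mul _
      (Measurable.indicator (by fun_prop) hB0m)]
    refine lintegral_mono fun t => ?_
    by_cases ht : t ∈ B0
    · simp only [Set.indicator_of_mem ht]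
      rw [← ENNReal.ofReal_add (h0 _) (h0 _), ← ENNReal.ofReal_ofNat, ← ENNReal.ofReal_mul (by norm_num)]
      apply ENNReal.ofReal_le_ofReal
      have := hF.2 (Set.mem_univ (t + a)) (Set.mem_univ (t - a))
        (show (0:ℝ) ≤ 1/2 by norm_num) (show (0:ℝ) ≤ 1/2 by norm_num) (by norm_num)
      have e : (1/2 : ℝ) • (t + a) + (1/2 : ℝ) • (t - a) = t := by
        ext i; simp; ring
      rw [e] at this
      simp only [smul_eq_mul] at this
      linarith
    · simp [Set.indicator_of_notMem ht]
  exact (ENNReal.mul_le_mul_iff_right (by norm_num) (by norm_num)).1 e3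

end

end PartA

section PartB
open MeasureTheory
open scoped ENNReal NNReal

noncomputable section
set_option linter.unusedSectionVars false

section steiner
variable {Y : Type*} [MeasurableSpace Y]

/-- half length of the line section -/
def hlen (g : ℝ × Y → ℝ≥0∞) (y : Y) : ℝ := (∫⁻ t, g (t, y)).toReal / 2

/-- Steiner symmetrization in the first coordinate -/
def steiner (g : ℝ × Y → ℝ≥0∞) (z : ℝ × Y) : ℝ≥0∞ :=
  Set.indicator (Set.Icc (-(hlen g z.2)) (hlen g z.2)) 1 z.1

lemma hlen_nonneg (g : ℝ × Y → ℝ≥0∞) (y : Y) : 0 ≤ hlen g y := by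
  unfold hlen; positivity

lemma measurable_hlen {g : ℝ × Y → ℝ≥0∞} (hg : Measurable g) : Measurable (hlen g) := by
  unfold hlen
  exact (hg.lintegral_prod_left').ennreal_toReal.div_const 2

lemma measurable_steiner {g : ℝ × Y → ℝ≥0∞} (hg : Measurable g) : Measurable (steiner g) := by
  have hh := measurable_hlen hg
  have : steiner g = Set.indicator {z : ℝ × Y | -(hlen g z.2) ≤ z.1 ∧ z.1 ≤ hlen g z.2} 1 := by
    ext z
    rfl
  rw [this]
  refine measurable_one.indicator ?_
  have h1 : Measurable fun z : ℝ × Y => hlen g z.2 := hh.comp measurable_snd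
  exact (measurableSet_le h1.neg measurable_fst).inter (measurableSet_le measurable_fst h1)

lemma steiner_le_one (g : ℝ × Y → ℝ≥0∞) (z) : steiner g z ≤ 1 := by
  unfold steiner Set.indicator; split_ifs <;> simp

lemma lintegral_steiner_line (g : ℝ × Y → ℝ≥0∞) (y : Y) (hy : ∫⁻ t, g (t, y) ≠ ∞) :
    ∫⁻ t, steiner g (t, y) = ∫⁻ t, g (t, y) := by
  unfold steiner
  simp only
  rw [lintegral_indicator_one measurableSet_Icc, Real.volume_Icc]
  have : hlen g y - -(hlen g y) = (∫⁻ t, g (t, y)).toReal := by unfold hlen; ring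
  rw [this, ENNReal.ofReal_toReal hy]

variable (ρ : Measure Y) [SFinite ρ]

lemma ae_line_finite {g : ℝ × Y → ℝ≥0∞} (hg : Measurable g)
    (hfin : ∫⁻ z, g z ∂(volume.prod ρ) ≠ ∞) : ∀ᵐ y ∂ρ, ∫⁻ t, g (t, y) ≠ ∞ := by
  rw [lintegral_prod_symm _ hg.aemeasurable] at hfin
  filter_upwards [ae_lt_top hg.lintegral_prod_left' hfin] with y hy using hy.ne

lemma lintegral_steiner {g : ℝ × Y → ℝ≥0∞} (hg : Measurable g)
    (hfin : ∫⁻ z, g z ∂(volume.prod ρ) ≠ ∞) :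
    ∫⁻ z, steiner g z ∂(volume.prod ρ) = ∫⁻ z, g z ∂(volume.prod ρ) := by
  rw [lintegral_prod_symm _ hg.aemeasurable, lintegral_prod_symm _ (measurable_steiner hg).aemeasurable]
  refine lintegral_congr_ae ?_
  filter_upwards [ae_line_finite ρ hg hfin] with y hy using lintegral_steiner_line g y hy

/-- the defect -/
def sdef (g : ℝ × Y → ℝ≥0∞) (z : ℝ × Y) : ℝ≥0∞ :=
  ENNReal.ofReal (|z.1^2 - (hlen g z.2)^2| * |(g z).toReal - (steiner g z).toReal|)

lemma measurable_sdef {g : ℝ × Y → ℝ≥0∞} (hg : Measurable g) : Measurable (sdef g) := by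
  have hh := measurable_hlen hg
  have := measurable_steiner hg
  unfold sdef
  apply Measurable.ennreal_ofReal
  apply Measurable.mul
  · exact continuous_abs.measurable.comp (by fun_prop)
  · exact continuous_abs.measurable.comp (by fun_prop)

lemma steiner_pointwise (g : ℝ × Y → ℝ≥0∞) (hg1 : ∀ z, g z ≤ 1) (c : ℝ) (hc : 0 ≤ c) (t : ℝ) (y : Y) :
    steiner g (t, y) * ENNReal.ofReal (t^2 + c) + g (t, y) * ENNReal.ofReal ((hlen g y)^2 + c) + sdef g (t, y)
    = g (t, y) * ENNReal.ofReal (t^2 + c) + steiner g (t, y) * ENNReal.ofReal ((hlen g y)^2 + c) := by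
  have hgf : g (t, y) ≠ ∞ := ne_top_of_le_ne_top ENNReal.one_ne_top (hg1 _)
  have hγ1 : (g (t,y)).toReal ≤ 1 := by
    have := ENNReal.toReal_mono ENNReal.one_ne_top (hg1 (t,y)); simpa using this
  have hγ0 : 0 ≤ (g (t,y)).toReal := ENNReal.toReal_nonneg
  unfold sdef
  rw [← ENNReal.ofReal_toReal hgf]
  simp only [ENNReal.toReal_ofReal hγ0]
  set γ := (g (t,y)).toReal
  have h0 := hlen_nonneg g y
  unfold steiner
  simp only
  set h := hlen g y
  by_cases ht : t ∈ Set.Icc (-h) h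
  · simp only [Set.indicator_of_mem ht, Pi.one_apply, one_mul, ENNReal.toReal_one]
    have : t^2 ≤ h^2 := by
      apply sq_le_sq'; exacts [ht.1, ht.2]
    rw [abs_of_nonpos (by linarith : t^2 - h^2 ≤ 0), abs_of_nonpos (by linarith : γ - 1 ≤ 0),
      ← ENNReal.ofReal_mul hγ0, ← ENNReal.ofReal_mul hγ0, ← ENNReal.ofReal_add (by positivity) (by positivity),
      ← ENNReal.ofReal_add (by positivity) (by nlinarith), ← ENNReal.ofReal_add (by positivity) (by positivity)]
    congr 1; ring
  · simp only [Set.indicator_of_notMem ht, zero_mul, zero_add, add_zero, ENNReal.toReal_zero]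
    have : h^2 ≤ t^2 := by
      rw [Set.mem_Icc, ← abs_le, not_le] at ht
      exact sq_le_sq.2 (by rw [abs_of_nonneg h0]; exact ht.le)
    rw [abs_of_nonneg (by linarith : 0 ≤ t^2 - h^2), sub_zero, abs_of_nonneg hγ0,
      ← ENNReal.ofReal_mul hγ0, ← ENNReal.ofReal_mul hγ0,
      ← ENNReal.ofReal_add (by positivity) (by nlinarith)]
    congr 1; ring

lemma steiner_moment {g : ℝ × Y → ℝ≥0∞} (hg : Measurable g) (hg1 : ∀ z, g z ≤ 1)
    (hfin : ∫⁻ z, g z ∂(volume.prod ρ) ≠ ∞) (N : Y → ℝ) (hN : Measurable N) (hN0 : ∀ y, 0 ≤ N y) :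
    ∫⁻ z, steiner g z * ENNReal.ofReal (z.1^2 + N z.2) ∂(volume.prod ρ) + ∫⁻ z, sdef g z ∂(volume.prod ρ)
     = ∫⁻ z, g z * ENNReal.ofReal (z.1^2 + N z.2) ∂(volume.prod ρ) := by
  have hGm := measurable_steiner hg
  have hDm := measurable_sdef hg
  rw [← lintegral_add_right _ hDm, lintegral_prod_symm _ (by fun_prop), lintegral_prod_symm _ (by fun_prop)]
  refine lintegral_congr_ae ?_
  filter_upwards [ae_line_finite ρ hg hfin] with y hy
  have key : (∫⁻ t, (steiner g (t, y) * ENNReal.ofReal (t^2 + N y) + sdef g (t, y))) + ∫⁻ t, g (t, y) * ENNReal.ofReal ((hlen g y)^2 + N y)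
      = (∫⁻ t, g (t, y) * ENNReal.ofReal (t^2 + N y)) + ∫⁻ t, g (t, y) * ENNReal.ofReal ((hlen g y)^2 + N y) := by
    have e1 : ∫⁻ t, g (t, y) * ENNReal.ofReal ((hlen g y)^2 + N y) = ∫⁻ t, steiner g (t, y) * ENNReal.ofReal ((hlen g y)^2 + N y) := by
      rw [lintegral_mul_const _ (by fun_prop), lintegral_mul_const _ (by fun_prop), lintegral_steiner_line g y hy]
    conv_rhs => rw [e1]
    rw [← lintegral_add_right _ (by fun_prop), ← lintegral_add_right _ (by fun_prop)]
    refine lintegral_congr fun t => ?_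
    rw [← steiner_pointwise g hg1 (N y) (hN0 y) t y]
    ring
  refine (ENNReal.add_left_inj ?_).1 key
  rw [lintegral_mul_const _ (by fun_prop)]
  exact ENNReal.mul_ne_top hy ENNReal.ofReal_ne_top

lemma steiner_ae_eq {g : ℝ × Y → ℝ≥0∞} (hg : Measurable g) (hg1 : ∀ z, g z ≤ 1)
    (hD : ∫⁻ z, sdef g z ∂(volume.prod ρ) = 0) : g =ᵐ[volume.prod ρ] steiner g := by
  have hh := measurable_hlen hg
  have hGm := measurable_steiner hg
  rw [lintegral_eq_zero_iff (measurable_sdef hg)] at hD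
  have hS : MeasurableSet {z : ℝ × Y | z.1^2 = (hlen g z.2)^2} := measurableSet_eq_fun (by fun_prop) (by fun_prop)
  have hnull : (volume.prod ρ) {z : ℝ × Y | z.1^2 = (hlen g z.2)^2} = 0 := by
    rw [Measure.prod_apply_symm hS, lintegral_eq_zero_iff (measurable_measure_prodMk_right hS)]
    refine Filter.Eventually.of_forall fun y => ?_
    refine measure_mono_null (t := {hlen g y, -hlen g y}) ?_ (Set.Finite.measure_zero (by simp) _)
    intro t ht
    exact sq_eq_sq_iff_eq_or_eq_neg.1 ht
  have hae : ∀ᵐ z ∂(volume.prod ρ), ¬ (z.1^2 = (hlen g z.2)^2) := by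
    rw [ae_iff]; simpa using hnull
  filter_upwards [hD, hae] with z h1 h2
  have hgf : g z ≠ ∞ := ne_top_of_le_ne_top ENNReal.one_ne_top (hg1 _)
  have hGf : steiner g z ≠ ∞ := ne_top_of_le_ne_top ENNReal.one_ne_top (steiner_le_one g z)
  simp only [sdef, Pi.zero_apply, ENNReal.ofReal_eq_zero] at h1
  have h3 : |z.1^2 - (hlen g z.2)^2| * |(g z).toReal - (steiner g z).toReal| = 0 := le_antisymm h1 (by positivity)
  rcases mul_eq_zero.1 h3 with h | h
  · exact absurd (sub_eq_zero.1 (abs_eq_zero.1 h)) h2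
  · exact (ENNReal.toReal_eq_toReal_iff' hgf hGf).1 (sub_eq_zero.1 (abs_eq_zero.1 h))

end steiner

/-- the determinant of split rows -/
def sdet {m : ℕ} (t : Fin (m+1) → ℝ) (y : Fin (m+1) → Fin m → ℝ) : ℝ :=
  Matrix.det (Matrix.of fun i => (Fin.cons (t i) (y i) : Fin (m+1) → ℝ))

def sdetL {m : ℕ} (y : Fin (m+1) → Fin m → ℝ) : (Fin (m+1) → ℝ) →ₗ[ℝ] ℝ where
  toFun t := sdet t y
  map_add' s t := by
    simp only [sdet, Matrix.det_succ_column_zero]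
    rw [← Finset.sum_add_distrib]
    refine Finset.sum_congr rfl fun i _ => ?_
    have : ∀ u : Fin (m+1) → ℝ, (Matrix.of fun i => (Fin.cons (u i) (y i) : Fin (m+1) → ℝ)).submatrix i.succAbove Fin.succ
      = Matrix.of fun a b => y (i.succAbove a) b := by
      intro u; ext a b; simp
    simp only [this]; simp; ring
  map_smul' c t := by
    simp only [sdet, Matrix.det_succ_column_zero, smul_eq_mul, RingHom.id_apply, Finset.mul_sum]
    refine Finset.sum_congr rfl fun i _ => ?_
    have : ∀ u : Fin (m+1) → ℝ, (Matrix.of fun i => (Fin.cons (u i) (y i) : Fin (m+1) → ℝ)).submatrix i.succAbove Fin.succ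
      = Matrix.of fun a b => y (i.succAbove a) b := by
      intro u; ext a b; simp
    simp only [this]; simp; ring

lemma convexOn_sdet {m : ℕ} (p : ℕ) (y : Fin (m+1) → Fin m → ℝ) :
    ConvexOn ℝ Set.univ (fun t => |sdet t y| ^ p) := by
  have h : ConvexOn ℝ Set.univ (fun s : ℝ => ‖s‖ ^ p) := (convexOn_norm convex_univ).pow (fun _ _ => norm_nonneg _) p
  exact h.comp_linearMap (sdetL y)

lemma continuous_sdet {m : ℕ} : Continuous (fun z : (Fin (m+1) → ℝ) × (Fin (m+1) → Fin m → ℝ) => sdet z.1 z.2) := by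
  unfold sdet
  apply Continuous.matrix_det
  refine continuous_pi fun i => continuous_pi fun j => ?_
  refine Fin.cases ?_ (fun j => ?_) j
  · simp; fun_prop
  · simp; fun_prop

/-- the determinant functional, split form -/
def Jsplit {m : ℕ} (p : ℕ) (g : ℝ × (Fin m → ℝ) → ℝ≥0∞) : ℝ≥0∞ :=
  ∫⁻ x : Fin (m+1) → ℝ × (Fin m → ℝ), (∏ i, g (x i)) * ENNReal.ofReal (|sdet (fun i => (x i).1) (fun i => (x i).2)| ^ p)

lemma Jsplit_eq {m : ℕ} (p : ℕ) {g : ℝ × (Fin m → ℝ) → ℝ≥0∞} (hg : Measurable g) :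
    Jsplit p g = ∫⁻ y : Fin (m+1) → Fin m → ℝ, ∫⁻ t : Fin (m+1) → ℝ, (∏ i, g (t i, y i)) * ENNReal.ofReal (|sdet t y| ^ p) := by
  have hd := (continuous_sdet (m := m)).measurable
  have h := (volume_measurePreserving_arrowProdEquivProdArrow ℝ (Fin m → ℝ) (Fin (m+1))).symm
  unfold Jsplit
  have hm : Measurable fun x : Fin (m+1) → ℝ × (Fin m → ℝ) => (∏ i, g (x i)) * ENNReal.ofReal (|sdet (fun i => (x i).1) (fun i => (x i).2)| ^ p) := by
    apply Measurable.mul (by fun_prop)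
    apply Measurable.ennreal_ofReal
    apply Measurable.pow_const
    apply continuous_abs.measurable.comp
    exact hd.comp (by fun_prop : Measurable fun x : Fin (m+1) → ℝ × (Fin m → ℝ) => ((fun i => (x i).1), (fun i => (x i).2)))
  rw [← h.lintegral_comp hm]
  exact lintegral_prod_symm _ (hm.comp (MeasurableEquiv.measurable _)).aemeasurable

lemma Jsplit_steiner {m : ℕ} (p : ℕ) {g : ℝ × (Fin m → ℝ) → ℝ≥0∞} (hg : Measurable g) (hg1 : ∀ z, g z ≤ 1)
    (hfin : ∫⁻ z, g z ≠ ∞) (hΦ : ∫⁻ z, g z * ENNReal.ofReal (z.1 ^ 2) ≠ ∞) :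
    Jsplit p (steiner g) ≤ Jsplit p g := by
  rw [Jsplit_eq p hg, Jsplit_eq p (measurable_steiner hg)]
  refine lintegral_mono_ae ?_
  have hm : Measurable fun z : ℝ × (Fin m → ℝ) => g z * ENNReal.ofReal |z.1| := by
    apply hg.mul
    exact (continuous_abs.measurable.comp measurable_fst).ennreal_ofReal
  have hfin1 : ∫⁻ z, g z * ENNReal.ofReal |z.1| ≠ ∞ := by
    refine ne_top_of_le_ne_top (ENNReal.add_ne_top.2 ⟨hfin, hΦ⟩) ?_
    rw [← lintegral_add_left hg]
    refine lintegral_mono fun z => ?_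
    nth_rewrite 2 [← mul_one (g z)]
    rw [← mul_add, ← ENNReal.ofReal_one, ← ENNReal.ofReal_add (by norm_num) (by positivity)]
    gcongr
    nlinarith [sq_nonneg (|z.1| - 1), sq_abs z.1]
  have ha := ae_line_finite (volume : Measure (Fin m → ℝ)) hg hfin
  have hb := ae_line_finite (volume : Measure (Fin m → ℝ)) hm hfin1
  have hab : ∀ i : Fin (m+1), ∀ᵐ y : Fin (m+1) → Fin m → ℝ, ∫⁻ t, g (t, y i) ≠ ∞ ∧ ∫⁻ t, g (t, y i) * ENNReal.ofReal |t| ≠ ∞ := by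
    intro i
    exact (Measure.quasiMeasurePreserving_eval (fun _ : Fin (m+1) => (volume : Measure (Fin m → ℝ))) i).ae (ha.and hb)
  filter_upwards [ae_all_iff.2 hab] with y hy
  have := line_ineq (m+1) (fun t => |sdet t y|^p) (convexOn_sdet p y) (fun _ => by positivity)
    (fun t => by
      have : sdet (-t) y = - sdet t y := (sdetL y).map_neg t
      simp only [this, abs_neg]) (fun i t => g (t, y i)) (fun i => by fun_prop) (fun i t => hg1 _)
    (fun i => (∫⁻ t, g (t, y i)).toReal) (fun i => (ENNReal.ofReal_toReal (hy i).1).symm) (fun i => ENNReal.toReal_nonneg)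
    (fun i => (hy i).2)
  exact this

end

end PartB

section PartC
open MeasureTheory
open scoped ENNReal NNReal

noncomputable section

def splitE (m : ℕ) : Eucl (m+1) ≃ᵐ ℝ × (Fin m → ℝ) :=
  (MeasurableEquiv.toLp 2 (Fin (m+1) → ℝ)).symm.trans (MeasurableEquiv.piFinSuccAbove (fun _ => ℝ) 0)

lemma splitE_mp (m : ℕ) : MeasurePreserving (splitE m) volume volume :=
  (PiLp.volume_preserving_ofLp (Fin (m+1))).trans (volume_preserving_piFinSuccAbove (fun _ : Fin (m+1) => ℝ) 0)

lemma splitE_fst {m : ℕ} (x : Eucl (m+1)) : (splitE m x).1 = x 0 := rfl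
lemma splitE_snd {m : ℕ} (x : Eucl (m+1)) : (splitE m x).2 = fun j => x j.succ := rfl

lemma splitE_norm {m : ℕ} (x : Eucl (m+1)) : ‖x‖^2 = (splitE m x).1^2 + ∑ j, ((splitE m x).2 j)^2 := by
  rw [EuclideanSpace.norm_sq_eq, Fin.sum_univ_succ]
  simp [splitE_fst, splitE_snd]

/-- the determinant functional -/
def Jf {k : ℕ} (p : ℕ) (g : Eucl k → ℝ≥0∞) : ℝ≥0∞ :=
  ∫⁻ x : Fin k → Eucl k, (∏ i, g (x i)) * ENNReal.ofReal (|(Matrix.of fun i j => x i j).det| ^ p)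

/-- second moment -/
def Mf {k : ℕ} (g : Eucl k → ℝ≥0∞) : ℝ≥0∞ := ∫⁻ x, g x * ENNReal.ofReal (‖x‖ ^ 2)

lemma measurable_detp {k : ℕ} (p : ℕ) : Measurable fun x : Fin k → Eucl k =>
    ENNReal.ofReal (|(Matrix.of fun i j => x i j).det| ^ p) := by
  apply Continuous.measurable
  apply ENNReal.continuous_ofReal.comp
  apply Continuous.pow
  apply continuous_abs.comp
  apply Continuous.matrix_det
  refine continuous_pi fun i => continuous_pi fun j => ?_
  simp only [Matrix.of_apply]
  fun_prop

lemma measurable_Jint {k : ℕ} (p : ℕ) {g : Eucl k → ℝ≥0∞} (hg : Measurable g) :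
    Measurable fun x : Fin k → Eucl k => (∏ i, g (x i)) * ENNReal.ofReal (|(Matrix.of fun i j => x i j).det| ^ p) :=
  (by fun_prop : Measurable fun x : Fin k → Eucl k => ∏ i, g (x i)).mul (measurable_detp p)

lemma Jf_split {m : ℕ} (p : ℕ) {g : ℝ × (Fin m → ℝ) → ℝ≥0∞} (hg : Measurable g) :
    Jf p (fun x => g (splitE m x)) = Jsplit p g := by
  have h := volume_preserving_pi (fun _ : Fin (m+1) => (splitE_mp m))
  unfold Jsplit
  rw [← h.lintegral_comp]
  · unfold Jf
    refine lintegral_congr fun x => ?_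
    congr 4
    unfold sdet
    congr 1
    ext i j
    refine Fin.cases ?_ (fun j => ?_) j
    · rfl
    · rfl
  · have hd := (continuous_sdet (m := m)).measurable
    apply Measurable.mul (by fun_prop)
    apply Measurable.ennreal_ofReal
    apply Measurable.pow_const
    apply continuous_abs.measurable.comp
    exact hd.comp (by fun_prop : Measurable fun x : Fin (m+1) → ℝ × (Fin m → ℝ) => ((fun i => (x i).1), (fun i => (x i).2)))

lemma detQ {k : ℕ} (Q : Eucl k ≃ₗᵢ[ℝ] Eucl k) (x : Fin k → Eucl k) :
    |(Matrix.of fun i j => Q (x i) j).det| = |(Matrix.of fun i j => x i j).det| := by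
  have h : ∀ y : Fin k → Eucl k, (Matrix.of fun i j => y i j).det = (EuclideanSpace.basisFun (Fin k) ℝ).toBasis.det y := by
    intro y
    rw [Module.Basis.det_apply, ← Matrix.det_transpose]
    rfl
  rw [h, h]
  have := (EuclideanSpace.basisFun (Fin k) ℝ).toBasis.det_comp (Q.toLinearEquiv : Eucl k →ₗ[ℝ] Eucl k) x
  have h2 : (fun i => Q (x i)) = (Q.toLinearEquiv : Eucl k →ₗ[ℝ] Eucl k) ∘ x := rfl
  rw [h2, this, abs_mul]
  have : |LinearMap.det (Q.toLinearEquiv : Eucl k →ₗ[ℝ] Eucl k)| = 1 := by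
    have h3 := Measure.addHaar_image_linearMap (volume : Measure (Eucl k)) (Q.toLinearEquiv : Eucl k →ₗ[ℝ] Eucl k) (Metric.closedBall 0 1)
    have h4 : (Q.toLinearEquiv : Eucl k →ₗ[ℝ] Eucl k) '' (Metric.closedBall 0 1) = Metric.closedBall 0 1 := by
      have := Q.image_closedBall 0 1
      simpa using this
    rw [h4] at h3
    have h5 : (volume (Metric.closedBall (0 : Eucl k) 1)) ≠ 0 := (Metric.measure_closedBall_pos _ _ (by norm_num)).ne'
    have h6 : (volume (Metric.closedBall (0 : Eucl k) 1)) ≠ ∞ := measure_closedBall_lt_top.ne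
    nth_rewrite 1 [← one_mul (volume (Metric.closedBall (0 : Eucl k) 1))] at h3
    rw [ENNReal.mul_left_inj h5 h6] at h3
    exact (ENNReal.ofReal_eq_one.1 h3.symm)
  rw [this, one_mul]

lemma Jf_comp {k : ℕ} (p : ℕ) {g : Eucl k → ℝ≥0∞} (hg : Measurable g) (Q : Eucl k ≃ₗᵢ[ℝ] Eucl k) :
    Jf p (fun x => g (Q x)) = Jf p g := by
  have h := volume_preserving_pi (fun _ : Fin k => Q.measurePreserving)
  unfold Jf
  conv_rhs => rw [← h.lintegral_comp (measurable_Jint p hg)]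
  refine lintegral_congr fun x => ?_
  rw [detQ]

lemma Mf_comp {k : ℕ} {g : Eucl k → ℝ≥0∞} (hg : Measurable g) (Q : Eucl k ≃ₗᵢ[ℝ] Eucl k) :
    Mf (fun x => g (Q x)) = Mf g := by
  unfold Mf
  conv_rhs => rw [← Q.measurePreserving.lintegral_comp (by fun_prop)]
  simp

/-- a good Steiner competitor in direction `e₀` -/
lemma steiner_e0 {m : ℕ} (p : ℕ) {g : Eucl (m+1) → ℝ≥0∞} (hg : Measurable g) (hg1 : ∀ z, g z ≤ 1)
    (hfin : ∫⁻ z, g z ≠ ∞) (hΦ : Mf g ≠ ∞) :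
    ∃ G : Eucl (m+1) → ℝ≥0∞, Measurable G ∧ (∀ z, G z ≤ 1) ∧ ∫⁻ z, G z = ∫⁻ z, g z ∧ Jf p G ≤ Jf p g ∧
      (Mf g ≤ Mf G → ∀ s R : ℝ, ∀ᵐ x, R < ‖x‖ → ‖x - EuclideanSpace.single 0 s‖ ≤ R → g x ≠ 0 →
        g (x - EuclideanSpace.single 0 s) = 1) := by
  set g' : ℝ × (Fin m → ℝ) → ℝ≥0∞ := fun z => g ((splitE m).symm z) with hg'
  have hg'm : Measurable g' := hg.comp (splitE m).symm.measurable
  have hgg : g = fun x => g' (splitE m x) := by ext x; simp [hg']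
  have hI : ∀ u : ℝ × (Fin m → ℝ) → ℝ≥0∞, Measurable u → ∫⁻ z, u z = ∫⁻ x, u (splitE m x) :=
    fun u hu => ((splitE_mp m).lintegral_comp hu).symm
  have hGm := measurable_steiner hg'm
  set N : (Fin m → ℝ) → ℝ := fun y => ∑ j, (y j)^2 with hN
  have hNm : Measurable N := by fun_prop
  have hN0 : ∀ y, 0 ≤ N y := fun y => Finset.sum_nonneg fun _ _ => sq_nonneg _
  have hfin' : ∫⁻ z, g' z ≠ ∞ := by rw [hI _ hg'm, ← hgg]; exact hfin
  have hM : ∀ u : ℝ × (Fin m → ℝ) → ℝ≥0∞, Measurable u → Mf (fun x => u (splitE m x)) = ∫⁻ z, u z * ENNReal.ofReal (z.1^2 + N z.2) := by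
    intro u hu
    rw [hI (fun z => u z * ENNReal.ofReal (z.1^2 + N z.2)) (by fun_prop)]
    unfold Mf
    simp_rw [splitE_norm]
    rfl
  have hMg : Mf g = ∫⁻ z, g' z * ENNReal.ofReal (z.1^2 + N z.2) := by
    rw [← hM g' hg'm, ← hgg]
  have hg'1 : ∀ z, g' z ≤ 1 := fun z => hg1 _
  have hmom := steiner_moment (volume : Measure (Fin m → ℝ)) hg'm hg'1 hfin' N hNm hN0
  refine ⟨fun x => steiner g' (splitE m x), hGm.comp (splitE m).measurable, fun z => steiner_le_one _ _, ?_, ?_, ?_⟩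
  · rw [← hI _ hGm]
    refine (lintegral_steiner (volume : Measure (Fin m → ℝ)) hg'm hfin').trans ?_
    change ∫⁻ z, g' z = _
    rw [hI _ hg'm, ← hgg]
  · rw [Jf_split p hGm, hgg, Jf_split p hg'm]
    refine Jsplit_steiner p hg'm hg'1 hfin' ?_
    rw [hMg] at hΦ
    refine ne_top_of_le_ne_top hΦ (lintegral_mono fun z => ?_)
    gcongr
    linarith [hN0 z.2]
  · intro hle s R
    rw [hMg] at hΦ
    rw [hMg, hM _ hGm] at hle
    have hD : ∫⁻ z, sdef g' z ∂(volume.prod (volume : Measure (Fin m → ℝ))) = 0 := by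
      have h1 : ∫⁻ z, steiner g' z * ENNReal.ofReal (z.1^2 + N z.2) ≠ ∞ := by
        refine ne_top_of_le_ne_top hΦ ?_
        exact le_of_le_of_eq (le_add_of_nonneg_right zero_le) hmom
      have h2 : (∫⁻ z, steiner g' z * ENNReal.ofReal (z.1^2 + N z.2)) + ∫⁻ z, sdef g' z ∂(volume.prod (volume : Measure (Fin m → ℝ))) ≤ 
          (∫⁻ z, steiner g' z * ENNReal.ofReal (z.1^2 + N z.2)) + 0 := by
        rw [add_zero]
        exact le_of_eq_of_le hmom hle
      exact le_antisymm ((ENNReal.add_le_add_iff_left h1).1 h2) zero_le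
    have hae : ∀ᵐ z : ℝ × (Fin m → ℝ), g' z = steiner g' z := steiner_ae_eq (volume : Measure (Fin m → ℝ)) hg'm hg'1 hD
    have hae2 : ∀ᵐ x : Eucl (m+1), g x = steiner g' (splitE m x) := by
      have := (splitE_mp m).quasiMeasurePreserving.ae hae
      filter_upwards [this] with x hx
      rw [← hx]; simp [hg']
    have hae3 : ∀ᵐ x : Eucl (m+1), g (x - EuclideanSpace.single 0 s) = steiner g' (splitE m (x - EuclideanSpace.single 0 s)) :=
      (measurePreserving_sub_right volume (EuclideanSpace.single 0 s : Eucl (m+1))).quasiMeasurePreserving.ae hae2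
    filter_upwards [hae2, hae3] with x h1 h2 hR1 hR2 hx
    rw [h2]
    rw [h1] at hx
    have hsnd : (splitE m (x - EuclideanSpace.single 0 s)).2 = (splitE m x).2 := by
      ext j; simp [splitE_snd]
    have hlt : |(splitE m (x - EuclideanSpace.single 0 s)).1| ≤ |(splitE m x).1| := by
      have h3 : ‖x - EuclideanSpace.single 0 s‖^2 ≤ ‖x‖^2 := by
        gcongr; linarith
      rw [splitE_norm, splitE_norm, hsnd] at h3
      exact sq_le_sq.1 (by linarith)
    have hmem : (splitE m x).1 ∈ Set.Icc (-(hlen g' (splitE m x).2)) (hlen g' (splitE m x).2) := by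
      by_contra hc
      exact hx (Set.indicator_of_notMem hc _)
    unfold steiner
    rw [hsnd, Set.indicator_of_mem]; rfl
    rw [Set.mem_Icc, ← abs_le] at hmem ⊢
    exact hlt.trans hmem

lemma steiner_dir {m : ℕ} (p : ℕ) {g : Eucl (m+1) → ℝ≥0∞} (hg : Measurable g) (hg1 : ∀ z, g z ≤ 1)
    (hfin : ∫⁻ z, g z ≠ ∞) (hΦ : Mf g ≠ ∞) (w : Eucl (m+1)) :
    ∃ G : Eucl (m+1) → ℝ≥0∞, Measurable G ∧ (∀ z, G z ≤ 1) ∧ ∫⁻ z, G z = ∫⁻ z, g z ∧ Jf p G ≤ Jf p g ∧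
      (Mf g ≤ Mf G → ∀ R : ℝ, ∀ᵐ x, R < ‖x‖ → ‖x - w‖ ≤ R → g x ≠ 0 → g (x - w) = 1) := by
  obtain ⟨Q, hQ⟩ : ∃ Q : Eucl (m+1) ≃ₗᵢ[ℝ] Eucl (m+1), Q (EuclideanSpace.single 0 ‖w‖) = w :=
    ⟨_, Submodule.reflection_sub (by simp)⟩
  have hQm : Measurable Q := Q.continuous.measurable
  have hQm' : Measurable Q.symm := Q.symm.continuous.measurable
  obtain ⟨G, hGm, hG1, hGI, hGJ, hG⟩ := steiner_e0 p (g := fun x => g (Q x)) (hg.comp hQm) (fun z => hg1 _)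
    (by rwa [Q.measurePreserving.lintegral_comp hg]) (by rwa [Mf_comp hg])
  refine ⟨fun x => G (Q.symm x), hGm.comp hQm', fun z => hG1 _, ?_, ?_, ?_⟩
  · rw [Q.symm.measurePreserving.lintegral_comp hGm, hGI, Q.measurePreserving.lintegral_comp hg]
  · rw [Jf_comp p hGm]; rwa [Jf_comp p hg] at hGJ
  · intro h R
    rw [Mf_comp hGm] at h
    rw [Mf_comp hg] at hG
    have := Q.symm.measurePreserving.quasiMeasurePreserving.ae (hG h ‖w‖ R)
    filter_upwards [this] with x hx h1 h2 h3
    have e : Q (Q.symm x - EuclideanSpace.single 0 ‖w‖) = x - w := by simp [hQ]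
    rw [e] at hx
    refine hx (by simpa using h1) ?_ (by simpa using h3)
    rw [← Q.norm_map, e]; exact h2

end

end PartC

section PartD
open MeasureTheory Filter Topology
open scoped ENNReal NNReal

noncomputable section

lemma lsc_lintegral {X : Type*} [TopologicalSpace X] [MeasurableSpace X] [OpensMeasurableSpace X]
    (h : X → ℝ≥0) (hc : Continuous h) :
    LowerSemicontinuous fun μ : ProbabilityMeasure X => ∫⁻ x, (h x : ℝ≥0∞) ∂(μ : Measure X) := by
  have e : (fun μ : ProbabilityMeasure X => ∫⁻ x, (h x : ℝ≥0∞) ∂(μ : Measure X)) =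
      fun μ : ProbabilityMeasure X => ⨆ N : ℕ, ∫⁻ x, ((min (h x) (N : ℝ≥0) : ℝ≥0) : ℝ≥0∞) ∂(μ : Measure X) := by
    ext μ
    rw [← lintegral_iSup]
    · refine lintegral_congr fun x => ?_
      apply le_antisymm
      · obtain ⟨N, hN⟩ := exists_nat_ge (h x)
        refine le_iSup_of_le N ?_
        rw [min_eq_left hN]
      · refine iSup_le fun N => ?_
        exact_mod_cast min_le_left _ _
    · intro N
      exact (ENNReal.continuous_coe.comp (hc.min continuous_const)).measurable
    · intro a b hab x
      simp only
      gcongr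
  rw [e]
  refine lowerSemicontinuous_iSup fun N => ?_
  apply Continuous.lowerSemicontinuous
  let f : BoundedContinuousFunction X ℝ≥0 := BoundedContinuousFunction.mkOfBound ⟨fun x => min (h x) (N : ℝ≥0), hc.min continuous_const⟩ N (by
    intro x y
    rw [NNReal.dist_eq, abs_le]
    have h1 : ((min (h x) (N : ℝ≥0) : ℝ≥0) : ℝ) ≤ N := by exact_mod_cast min_le_right _ _
    have h2 : ((min (h y) (N : ℝ≥0) : ℝ≥0) : ℝ) ≤ N := by exact_mod_cast min_le_right _ _
    have h3 : (0:ℝ) ≤ ((min (h x) (N : ℝ≥0) : ℝ≥0) : ℝ) := NNReal.coe_nonneg _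
    have h4 : (0:ℝ) ≤ ((min (h y) (N : ℝ≥0) : ℝ≥0) : ℝ) := NNReal.coe_nonneg _
    constructor
    · change -(N:ℝ) ≤ ((min (h x) (N : ℝ≥0) : ℝ≥0) : ℝ) - ((min (h y) (N : ℝ≥0) : ℝ≥0) : ℝ)
      linarith
    · change ((min (h x) (N : ℝ≥0) : ℝ≥0) : ℝ) - ((min (h y) (N : ℝ≥0) : ℝ≥0) : ℝ) ≤ (N:ℝ)
      linarith)
  exact ProbabilityMeasure.continuous_lintegral_boundedContinuousFunction f

lemma isClosed_le_measure {k : ℕ} (c : ℝ≥0) :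
    IsClosed {μ : ProbabilityMeasure (Eucl k) | (μ : Measure (Eucl k)) ≤ c • volume} := by
  have e : {μ : ProbabilityMeasure (Eucl k) | (μ : Measure (Eucl k)) ≤ c • volume} =
      ⋂ U : {U : Set (Eucl k) // IsOpen U}, {μ : ProbabilityMeasure (Eucl k) | (μ : Measure (Eucl k)) U ≤ (c • volume : Measure (Eucl k)) U} := by
    ext μ
    simp only [Set.mem_iInter, Set.mem_ofPred_eq]
    constructor
    · intro h U; exact h U
    · intro h
      refine Measure.le_iff.2 fun s hs => ?_
      rw [Set.measure_eq_iInf_isOpen s (c • volume : Measure (Eucl k))]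
      refine le_iInf fun U => le_iInf fun hU => le_iInf fun hUo => ?_
      exact (measure_mono hU).trans (h ⟨U, hUo⟩)
  rw [e]
  refine isClosed_iInter fun U => ?_
  have : LowerSemicontinuous fun μ : ProbabilityMeasure (Eucl k) => (μ : Measure (Eucl k)) (U : Set (Eucl k)) := by
    rw [lowerSemicontinuous_iff_le_liminf]
    intro μ
    exact ProbabilityMeasure.le_liminf_measure_open_of_tendsto tendsto_id U.2
  exact this.isClosed_preimage _

/-- second moment of a measure -/
def Mμ {k : ℕ} (μ : Measure (Eucl k)) : ℝ≥0∞ := ∫⁻ x, ENNReal.ofReal (‖x‖ ^ 2) ∂μ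
def Jμ {k : ℕ} (p : ℕ) (μ : Measure (Eucl k)) : ℝ≥0∞ :=
  ∫⁻ x, ENNReal.ofReal (|(Matrix.of fun i j => x i j).det| ^ p) ∂(Measure.pi fun _ : Fin k => μ)

lemma lsc_M {k : ℕ} : LowerSemicontinuous fun μ : ProbabilityMeasure (Eucl k) => Mμ (μ : Measure (Eucl k)) := by
  refine lsc_lintegral (fun x : Eucl k => Real.toNNReal (‖x‖^2)) (by fun_prop)

lemma continuous_detp {k : ℕ} : Continuous fun x : Fin k → Eucl k => (Matrix.of fun i j => x i j).det := by
  apply Continuous.matrix_det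
  refine continuous_pi fun i => continuous_pi fun j => ?_
  simp only [Matrix.of_apply]
  fun_prop

lemma lsc_J {k : ℕ} (p : ℕ) : LowerSemicontinuous fun μ : ProbabilityMeasure (Eucl k) => Jμ p (μ : Measure (Eucl k)) := by
  have h := lsc_lintegral (fun x : Fin k → Eucl k => Real.toNNReal (|(Matrix.of fun i j => x i j).det| ^ p))
    (continuous_real_toNNReal.comp ((continuous_abs.comp continuous_detp).pow p))
  have hc : Continuous fun μ : ProbabilityMeasure (Eucl k) => ProbabilityMeasure.pi (fun _ : Fin k => μ) := by fun_prop
  exact h.comp hc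

lemma exists_min_measure {k : ℕ} (p : ℕ) (c : ℝ≥0) (M0 : ℝ≥0) (J0 : ℝ≥0∞) (μ0 : ProbabilityMeasure (Eucl k))
    (h1 : (μ0 : Measure (Eucl k)) ≤ c • volume) (h2 : Mμ (μ0 : Measure (Eucl k)) ≤ M0) (h3 : Jμ p (μ0 : Measure (Eucl k)) ≤ J0) :
    ∃ μ : ProbabilityMeasure (Eucl k), (μ : Measure (Eucl k)) ≤ c • volume ∧ Mμ (μ : Measure (Eucl k)) ≤ M0 ∧
      Jμ p (μ : Measure (Eucl k)) ≤ J0 ∧ ∀ μ' : ProbabilityMeasure (Eucl k), (μ' : Measure (Eucl k)) ≤ c • volume →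
        Jμ p (μ' : Measure (Eucl k)) ≤ J0 → Mμ (μ : Measure (Eucl k)) ≤ Mμ (μ' : Measure (Eucl k)) := by
  set S : Set (ProbabilityMeasure (Eucl k)) := {μ | (μ : Measure (Eucl k)) ≤ c • volume} ∩
    ({μ | Mμ (μ : Measure (Eucl k)) ≤ M0} ∩ {μ | Jμ p (μ : Measure (Eucl k)) ≤ J0}) with hS
  have hcl : IsClosed S := (isClosed_le_measure c).inter ((lsc_M.isClosed_preimage _).inter ((lsc_J p).isClosed_preimage _))
  have hK := isCompact_setOfPred_probabilityMeasure_mass_eq_compl_isCompact_le (E := Eucl k)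
    (u := fun n : ℕ => M0 / ((n : ℝ≥0) + 1)) (K := fun n : ℕ => Metric.closedBall 0 ((n : ℝ) + 1))
    (by
      have := tendsto_const_div_atTop_nhds_zero_nat (M0 : ℝ)
      have h2 := (tendsto_add_atTop_iff_nat 1).2 this
      rw [← NNReal.tendsto_coe]
      simpa using h2) (fun n => isCompact_closedBall _ _) (Or.inl inferInstance)
  have hcomp : IsCompact S := by
    refine hK.of_isClosed_subset hcl ?_
    rintro μ ⟨-, hμ, -⟩ n
    rw [← ENNReal.coe_le_coe, ProbabilityMeasure.ennreal_coeFn_eq_coeFn_toMeasure]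
    have hmk := mul_meas_ge_le_lintegral (μ := (μ : Measure (Eucl k))) (f := fun x : Eucl k => ENNReal.ofReal (‖x‖ ^ 2)) (by fun_prop) (((n : ℝ≥0) + 1 : ℝ≥0) : ℝ≥0∞)
    rw [ENNReal.coe_div (by positivity), ENNReal.le_div_iff_mul_le (by simp) (by simp), mul_comm]
    refine le_trans ?_ (hmk.trans hμ)
    gcongr
    intro x hx
    simp only [Set.mem_compl_iff, Metric.mem_closedBall, dist_zero_right, not_le] at hx
    simp only [Set.mem_ofPred_eq]
    have : (((n : ℝ≥0) + 1 : ℝ≥0) : ℝ≥0∞) = ENNReal.ofReal ((n : ℝ) + 1) := by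
      rw [ENNReal.ofReal, Real.toNNReal_add (by positivity) (by positivity)]; simp
    rw [this]
    apply ENNReal.ofReal_le_ofReal
    have : (0:ℝ) ≤ n := by positivity
    nlinarith
  obtain ⟨μ, hμS, hμ⟩ := LowerSemicontinuousOn.exists_isMinOn (s := S) ⟨μ0, ⟨h1, h2, h3⟩⟩ hcomp (lsc_M.lowerSemicontinuousOn S)
  refine ⟨μ, hμS.1, hμS.2.1, hμS.2.2, fun μ' a b => ?_⟩
  by_cases hM : Mμ (μ' : Measure (Eucl k)) ≤ M0
  · exact hμ ⟨a, hM, b⟩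
  · exact hμS.2.1.trans (not_le.1 hM).le

/-- density version -/
lemma exists_min_density {k : ℕ} (p : ℕ) {g0 : Eucl k → ℝ≥0∞} (hg : Measurable g0) (hg1 : ∀ z, g0 z ≤ 1)
    (hfin : ∫⁻ z, g0 z ≠ ∞) (hpos : ∫⁻ z, g0 z ≠ 0) (hΦ : Mf g0 ≠ ∞) :
    ∃ g : Eucl k → ℝ≥0∞, Measurable g ∧ (∀ z, g z ≤ 1) ∧ ∫⁻ z, g z = ∫⁻ z, g0 z ∧ Jf p g ≤ Jf p g0 ∧ Mf g ≠ ∞ ∧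
      ∀ g' : Eucl k → ℝ≥0∞, Measurable g' → (∀ z, g' z ≤ 1) → ∫⁻ z, g' z = ∫⁻ z, g0 z → Jf p g' ≤ Jf p g0 → Mf g ≤ Mf g' := by
  set V := ∫⁻ z, g0 z with hV
  have hc0 : V⁻¹ ≠ 0 := ENNReal.inv_ne_zero.2 hfin
  have hct : V⁻¹ ≠ ∞ := ENNReal.inv_ne_top.2 hpos
  set c : ℝ≥0 := (V⁻¹).toNNReal with hc
  have hcV : (c : ℝ≥0∞) = V⁻¹ := ENNReal.coe_toNNReal hct
  set md : (Eucl k → ℝ≥0∞) → Measure (Eucl k) := fun g => volume.withDensity (fun x => V⁻¹ * g x) with hmd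
  have hprob : ∀ g, Measurable g → ∫⁻ z, g z = V → IsProbabilityMeasure (md g) := by
    intro g hgm hgV
    constructor
    simp only [hmd]
    rw [withDensity_apply _ MeasurableSet.univ, Measure.restrict_univ, lintegral_const_mul _ hgm, hgV,
      ENNReal.inv_mul_cancel hpos hfin]
  have hle : ∀ g, (∀ z, g z ≤ 1) → md g ≤ c • volume := by
    intro g h1
    refine Measure.le_iff.2 fun s hs => ?_
    simp only [hmd]
    rw [withDensity_apply _ hs]
    refine (lintegral_mono (g := fun _ => V⁻¹) fun x => ?_).trans ?_
    · exact mul_le_of_le_one_right zero_le (h1 x)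
    · rw [setLIntegral_const, ← hcV]; rfl
  have hM : ∀ g, Measurable g → Mμ (md g) = V⁻¹ * Mf g := by
    intro g hgm
    simp only [hmd, Mμ, Mf]
    rw [lintegral_withDensity_eq_lintegral_mul _ (by fun_prop) (by fun_prop), ← lintegral_const_mul _ (by fun_prop)]
    refine lintegral_congr fun x => ?_
    simp only [Pi.mul_apply]; ring
  have hJ : ∀ g, Measurable g → (∀ z, g z ≤ 1) → Jμ p (md g) = (V⁻¹)^k * Jf p g := by
    intro g hgm h1
    simp only [hmd, Jμ, Jf]
    rw [pi_withDensity volume k (fun _ x => V⁻¹ * g x) (fun _ => by fun_prop)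
      (fun _ x => ENNReal.mul_ne_top hct (ne_top_of_le_ne_top ENNReal.one_ne_top (h1 x))),
      lintegral_withDensity_eq_lintegral_mul _ (by fun_prop) (measurable_detp p),
      ← lintegral_const_mul _ (measurable_Jint p hgm)]
    refine lintegral_congr fun x => ?_
    simp only [Pi.mul_apply, Finset.prod_mul_distrib, Finset.prod_const, Finset.card_univ, Fintype.card_fin]
    ring
  have hcancelJ : ∀ a b : ℝ≥0∞, (V⁻¹)^k * a ≤ (V⁻¹)^k * b ↔ a ≤ b := fun a b =>
    ENNReal.mul_le_mul_iff_right (pow_ne_zero _ hc0) (ENNReal.pow_ne_top hct)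
  have hcancel : ∀ a b : ℝ≥0∞, (V⁻¹) * a ≤ (V⁻¹) * b ↔ a ≤ b := fun a b =>
    ENNReal.mul_le_mul_iff_right hc0 hct
  have hM0 : V⁻¹ * Mf g0 ≠ ∞ := ENNReal.mul_ne_top hct hΦ
  obtain ⟨μ, h1, h2, h3, h4⟩ := exists_min_measure p c (V⁻¹ * Mf g0).toNNReal ((V⁻¹)^k * Jf p g0)
    ⟨md g0, hprob g0 hg rfl⟩ (hle g0 hg1) (by rw [ENNReal.coe_toNNReal hM0]; exact (hM g0 hg).le) (hJ g0 hg hg1).le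
  rw [ENNReal.coe_toNNReal hM0] at h2
  have hac : (μ : Measure (Eucl k)) ≪ volume := by
    refine (Measure.absolutelyContinuous_of_le h1).trans ?_
    exact Measure.smul_absolutelyContinuous
  set r := (μ : Measure (Eucl k)).rnDeriv volume with hr
  have hrm : Measurable r := Measure.measurable_rnDeriv _ _
  have hrμ : volume.withDensity r = (μ : Measure (Eucl k)) := Measure.withDensity_rnDeriv_eq _ _ hac
  have hrle : r ≤ᵐ[volume] fun _ => V⁻¹ := by
    refine ae_le_of_forall_setLIntegral_le_of_sigmaFinite hrm fun s hs _ => ?_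
    rw [← withDensity_apply _ hs, hrμ, setLIntegral_const, ← hcV]
    exact h1 s
  set g : Eucl k → ℝ≥0∞ := fun x => min (V * r x) 1 with hgd
  have hgm : Measurable g := by fun_prop
  have hg1' : ∀ z, g z ≤ 1 := fun z => min_le_right _ _
  have hgr : (fun x => V⁻¹ * g x) =ᵐ[volume] r := by
    filter_upwards [hrle] with x hx
    have : V * r x ≤ 1 := by
      calc V * r x ≤ V * V⁻¹ := by gcongr
        _ = 1 := ENNReal.mul_inv_cancel hpos hfin
    simp only [hgd]
    rw [min_eq_left this, ← mul_assoc, ENNReal.inv_mul_cancel hpos hfin, one_mul]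
  have hmdg : md g = (μ : Measure (Eucl k)) := by
    simp only [hmd]
    rw [withDensity_congr_ae hgr, hrμ]
  have hgV : ∫⁻ z, g z = V := by
    have h5 : md g Set.univ = 1 := by rw [hmdg]; exact measure_univ
    simp only [hmd] at h5
    rw [withDensity_apply _ MeasurableSet.univ, Measure.restrict_univ, lintegral_const_mul _ hgm] at h5
    calc _ = V * (V⁻¹ * ∫⁻ z, g z) := by rw [← mul_assoc, ENNReal.mul_inv_cancel hpos hfin, one_mul]
      _ = V := by rw [h5, mul_one]
  refine ⟨g, hgm, hg1', hgV, ?_, ?_, ?_⟩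
  · rw [← hmdg, hJ g hgm hg1', hcancelJ] at h3; exact h3
  · rw [← hmdg, hM g hgm, hcancel] at h2; exact ne_top_of_le_ne_top hΦ h2
  · intro g' hm' h1' hV' hJ'
    have := h4 ⟨md g', hprob g' hm' hV'⟩ (hle g' h1') ((hJ g' hm' h1').le.trans ((hcancelJ _ _).2 hJ'))
    rw [← hmdg, hM g hgm] at this
    exact (hcancel _ _).1 (this.trans (hM g' hm').le)

end

end PartD

section PartE
open MeasureTheory Filter Topology
open scoped ENNReal NNReal

noncomputable section

lemma rigid {k : ℕ} {g : Eucl k → ℝ≥0∞} (hg : Measurable g) (hg1 : ∀ z, g z ≤ 1) (R : ℝ)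
    (hV : ∫⁻ z, g z = volume (Metric.closedBall (0 : Eucl k) R))
    (h : ∀ w : Eucl k, ∀ᵐ x, R < ‖x‖ → ‖x - w‖ ≤ R → g x ≠ 0 → g (x - w) = 1) :
    g =ᵐ[volume] (Metric.closedBall (0 : Eucl k) R).indicator 1 := by
  set B := Metric.closedBall (0 : Eucl k) R with hB
  have hBm : MeasurableSet B := measurableSet_closedBall
  set a : Eucl k → ℝ≥0∞ := Bᶜ.indicator g with ha
  set b : Eucl k → ℝ≥0∞ := B.indicator (fun x => 1 - g x) with hb
  have ham : Measurable a := hg.indicator hBm.compl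
  have hbm : Measurable b := (measurable_const.sub hg).indicator hBm
  have hBf : volume B ≠ ∞ := measure_closedBall_lt_top.ne
  have hprod : (∫⁻ x, a x) * ∫⁻ x, b x = 0 := by
    have e1 : (∫⁻ x, a x) * ∫⁻ x, b x = ∫⁻ x, ∫⁻ w, a x * b (x - w) := by
      rw [← lintegral_mul_const _ ham]
      refine lintegral_congr fun x => ?_
      rw [lintegral_const_mul _ (by fun_prop), lintegral_sub_left_eq_self]
    rw [e1, lintegral_lintegral_swap (by fun_prop)]
    rw [lintegral_eq_zero_iff' (by fun_prop)]
    refine Eventually.of_forall fun w => ?_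
    simp only [Pi.zero_apply]
    rw [lintegral_eq_zero_iff (by fun_prop)]
    filter_upwards [h w] with x hx
    simp only [Pi.zero_apply, mul_eq_zero]
    by_contra hc
    push Not at hc
    obtain ⟨h1, h2⟩ := hc
    have h1' : x ∈ Bᶜ := Set.mem_of_indicator_ne_zero h1
    have h2' : x - w ∈ B := Set.mem_of_indicator_ne_zero h2
    rw [ha, Set.indicator_of_mem h1'] at h1
    rw [hb, Set.indicator_of_mem h2'] at h2
    simp only [hB, Set.mem_compl_iff, Metric.mem_closedBall, dist_zero_right, not_le] at h1' h2'
    exact h2 (by rw [hx h1' h2' h1]; simp)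
  have hsum1 : (∫⁻ x, B.indicator g x) + ∫⁻ x, a x = volume B := by
    rw [← hV, ← lintegral_add_left (hg.indicator hBm)]
    refine lintegral_congr fun x => ?_
    exact congrFun (Set.indicator_self_add_compl B g) x
  have hsum2 : (∫⁻ x, B.indicator g x) + ∫⁻ x, b x = volume B := by
    rw [← lintegral_indicator_one hBm, ← lintegral_add_left (hg.indicator hBm)]
    refine lintegral_congr fun x => ?_
    by_cases hx : x ∈ B
    · simp only [hb, Set.indicator_of_mem hx, Pi.one_apply]
      exact add_tsub_cancel_of_le (hg1 x)
    · simp [hb, Set.indicator_of_notMem hx]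
  have hfi : ∫⁻ x, B.indicator g x ≠ ∞ := ne_top_of_le_ne_top hBf (hsum1 ▸ le_add_of_nonneg_right zero_le)
  have hab : ∫⁻ x, a x = ∫⁻ x, b x := (ENNReal.add_right_inj hfi).1 (hsum1.trans hsum2.symm)
  have ha0 : ∫⁻ x, a x = 0 := by
    rw [← hab] at hprod; exact mul_self_eq_zero.1 hprod
  have hb0 : ∫⁻ x, b x = 0 := hab ▸ ha0
  rw [lintegral_eq_zero_iff ham] at ha0
  rw [lintegral_eq_zero_iff hbm] at hb0
  filter_upwards [ha0, hb0] with x h1 h2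
  by_cases hx : x ∈ B
  · rw [hb, Set.indicator_of_mem hx] at h2
    rw [Set.indicator_of_mem hx]
    exact le_antisymm (hg1 x) (tsub_eq_zero_iff_le.1 h2)
  · rw [ha, Set.indicator_of_mem (show x ∈ Bᶜ from hx)] at h1
    rw [Set.indicator_of_notMem hx]; exact h1

lemma Jf_congr {k : ℕ} (p : ℕ) {g g' : Eucl k → ℝ≥0∞} (h : g =ᵐ[volume] g') : Jf p g = Jf p g' := by
  unfold Jf
  refine lintegral_congr_ae ?_
  have : ∀ i : Fin k, ∀ᵐ x : Fin k → Eucl k, g (x i) = g' (x i) := fun i =>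
    (Measure.quasiMeasurePreserving_eval (fun _ : Fin k => (volume : Measure (Eucl k))) i).ae h
  filter_upwards [ae_all_iff.2 this] with x hx
  simp_rw [hx]

lemma Jf_mono {k : ℕ} (p : ℕ) {g g' : Eucl k → ℝ≥0∞} (h : ∀ x, g x ≤ g' x) : Jf p g ≤ Jf p g' := by
  unfold Jf
  refine lintegral_mono fun x => ?_
  gcongr
  exact h _

lemma busemann_ball {m : ℕ} (p : ℕ) {g0 : Eucl (m+1) → ℝ≥0∞} (hg : Measurable g0) (hg1 : ∀ z, g0 z ≤ 1)
    (hfin : ∫⁻ z, g0 z ≠ ∞) (hpos : ∫⁻ z, g0 z ≠ 0) (hΦ : Mf g0 ≠ ∞) (R : ℝ)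
    (hV : ∫⁻ z, g0 z = volume (Metric.closedBall (0 : Eucl (m+1)) R)) :
    Jf p ((Metric.closedBall (0 : Eucl (m+1)) R).indicator 1) ≤ Jf p g0 := by
  obtain ⟨g, hgm, hg1', hgV, hgJ, hgM, hmin⟩ := exists_min_density p hg hg1 hfin hpos hΦ
  rw [← Jf_congr p (rigid hgm hg1' R (hgV.trans hV) ?_)]
  · exact hgJ
  · intro w
    obtain ⟨G, hGm, hG1, hGV, hGJ, hG⟩ := steiner_dir p hgm hg1' (hgV ▸ hfin) hgM w
    exact hG (hmin G hGm hG1 (hGV.trans hgV) (hGJ.trans hgJ)) R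

lemma Jf_scale {k : ℕ} (p : ℕ) (R : ℝ) (hR : 0 < R) :
    Jf p ((Metric.closedBall (0 : Eucl k) R).indicator 1) =
      (ENNReal.ofReal (R ^ k)) ^ (k + p) * Jf p ((Metric.closedBall (0 : Eucl k) 1).indicator 1) := by
  have hm : ∀ R, Measurable ((Metric.closedBall (0 : Eucl k) R).indicator (1 : Eucl k → ℝ≥0∞)) :=
    fun R => measurable_one.indicator measurableSet_closedBall
  have h := Measure.map_addHaar_smul (volume : Measure (Fin k → Eucl k)) (inv_ne_zero hR.ne')
  have hfr : Module.finrank ℝ (Fin k → Eucl k) = k * k := by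
    rw [Module.finrank_pi_fintype]; simp [Eucl]
  have key : ∀ u : (Fin k → Eucl k) → ℝ≥0∞, Measurable u → ∫⁻ x, u (R⁻¹ • x) = ENNReal.ofReal (R ^ (k*k)) * ∫⁻ x, u x := by
    intro u hu
    rw [← lintegral_map (μ := volume) hu (measurable_const_smul R⁻¹), h, lintegral_smul_measure, hfr]
    congr 2
    rw [abs_of_nonneg (by positivity)]; simp
  unfold Jf
  have e : ∀ x : Fin k → Eucl k, (∏ i, (Metric.closedBall (0 : Eucl k) R).indicator (1 : Eucl k → ℝ≥0∞) (x i)) *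
      ENNReal.ofReal (|(Matrix.of fun i j => x i j).det| ^ p) = ENNReal.ofReal (R ^ (k * p)) *
      ((∏ i, (Metric.closedBall (0 : Eucl k) 1).indicator (1 : Eucl k → ℝ≥0∞) ((R⁻¹ • x) i)) *
      ENNReal.ofReal (|(Matrix.of fun i j => (R⁻¹ • x) i j).det| ^ p)) := by
    intro x
    have h1 : ∀ i, (Metric.closedBall (0 : Eucl k) 1).indicator (1 : Eucl k → ℝ≥0∞) ((R⁻¹ • x) i) =
        (Metric.closedBall (0 : Eucl k) R).indicator (1 : Eucl k → ℝ≥0∞) (x i) := by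
      intro i
      simp only [Set.indicator, Metric.mem_closedBall, dist_zero_right, Pi.smul_apply, norm_smul, norm_inv, Real.norm_eq_abs, abs_of_pos hR]
      congr 1
      rw [eq_iff_iff, inv_mul_le_iff₀ hR, mul_one]
    have h2 : (Matrix.of fun i j => (R⁻¹ • x) i j).det = (R⁻¹)^k * (Matrix.of fun i j => x i j).det := by
      have : (Matrix.of fun i j => (R⁻¹ • x) i j) = R⁻¹ • (Matrix.of fun i j => x i j) := by
        ext i j; simp
      rw [this, Matrix.det_smul]; simp
    simp_rw [h1]
    rw [h2, mul_left_comm, ← ENNReal.ofReal_mul (by positivity)]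
    congr 2
    rw [abs_mul, mul_pow, abs_of_nonneg (by positivity : (0:ℝ) ≤ R⁻¹ ^ k), ← mul_assoc, ← pow_mul, ← mul_pow, mul_inv_cancel₀ hR.ne']
    simp
  simp_rw [e]
  refine (lintegral_const_mul _ ((measurable_Jint p (hm 1)).comp (measurable_const_smul R⁻¹))).trans ?_
  refine (congrArg (fun t => ENNReal.ofReal (R ^ (k * p)) * t) (key _ (measurable_Jint p (hm 1)))).trans ?_
  rw [← mul_assoc]
  congr 1
  rw [← ENNReal.ofReal_mul (by positivity), ← ENNReal.ofReal_pow (by positivity), ← pow_mul]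
  congr 1; ring

/-- functional Busemann inequality -/
lemma busemann {m : ℕ} (p : ℕ) {g : Eucl (m+1) → ℝ≥0∞} (hg : Measurable g) (hg1 : ∀ z, g z ≤ 1) :
    ((∫⁻ z, g z) / volume (Metric.closedBall (0 : Eucl (m+1)) 1)) ^ (m + 1 + p) *
      Jf p ((Metric.closedBall (0 : Eucl (m+1)) 1).indicator 1) ≤ Jf p g := by
  set ω := volume (Metric.closedBall (0 : Eucl (m+1)) 1) with hω
  have hω0 : ω ≠ 0 := (Metric.measure_closedBall_pos _ _ (by norm_num)).ne'
  have hωt : ω ≠ ∞ := measure_closedBall_lt_top.ne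
  -- finite moment case
  have fin : ∀ g : Eucl (m+1) → ℝ≥0∞, Measurable g → (∀ z, g z ≤ 1) → ∫⁻ z, g z ≠ ∞ → Mf g ≠ ∞ → 
      ((∫⁻ z, g z) / ω) ^ (m + 1 + p) * Jf p ((Metric.closedBall (0 : Eucl (m+1)) 1).indicator 1) ≤ Jf p g := by
    intro g hg hg1 hfin hM
    by_cases h0 : ∫⁻ z, g z = 0
    · rw [h0]; simp
    set q := (∫⁻ z, g z) / ω with hq
    have hqt : q ≠ ∞ := ENNReal.div_ne_top hfin hω0
    have hq0 : q ≠ 0 := by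
      simp only [hq, ne_eq, ENNReal.div_eq_zero_iff, not_or]; exact ⟨h0, hωt⟩
    have hqp : 0 < q.toReal := ENNReal.toReal_pos hq0 hqt
    set R := q.toReal ^ (((m+1 : ℕ) : ℝ)⁻¹) with hR
    have hRp : 0 < R := Real.rpow_pos_of_pos hqp _
    have hRq : ENNReal.ofReal (R ^ (m+1)) = q := by
      rw [hR, Real.rpow_inv_natCast_pow hqp.le (by omega), ENNReal.ofReal_toReal hqt]
    have := busemann_ball p hg hg1 hfin h0 hM R (by
      rw [Measure.addHaar_closedBall' _ _ hRp.le]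
      rw [finrank_euclideanSpace_fin, hRq, hq, ENNReal.div_mul_cancel hω0 hωt])
    rw [Jf_scale p R hRp, hRq] at this
    exact this
  by_cases h0 : ∫⁻ z, g z = 0
  · rw [h0]; simp
  set gn : ℕ → Eucl (m+1) → ℝ≥0∞ := fun n => (Metric.closedBall (0 : Eucl (m+1)) n).indicator g with hgn
  have hgnm : ∀ n, Measurable (gn n) := fun n => hg.indicator measurableSet_closedBall
  have hgnle : ∀ n x, gn n x ≤ g x := fun n x => Set.indicator_le_self _ _ _
  have hlim : Tendsto (fun n => ∫⁻ z, gn n z) atTop (𝓝 (∫⁻ z, g z)) := by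
    apply lintegral_tendsto_of_tendsto_of_monotone
    · exact fun n => (hgnm n).aemeasurable
    · refine Eventually.of_forall fun x a b hab => ?_
      exact Set.indicator_le_indicator_of_subset (Metric.closedBall_subset_closedBall (by exact_mod_cast hab)) (fun _ => zero_le) x
    · refine Eventually.of_forall fun x => ?_
      obtain ⟨N, hN⟩ := exists_nat_ge ‖x‖
      refine tendsto_const_nhds.congr' ?_
      filter_upwards [eventually_ge_atTop N] with n hn
      simp only [hgn]
      rw [Set.indicator_of_mem]
      simp only [Metric.mem_closedBall, dist_zero_right]
      exact hN.trans (by exact_mod_cast hn)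
  have hn : ∀ n, ((∫⁻ z, gn n z) / ω) ^ (m + 1 + p) * Jf p ((Metric.closedBall (0 : Eucl (m+1)) 1).indicator 1) ≤ Jf p g := by
    intro n
    have hBf : volume (Metric.closedBall (0 : Eucl (m+1)) n) ≠ ∞ := measure_closedBall_lt_top.ne
    refine (fin (gn n) (hgnm n) (fun z => (hgnle n z).trans (hg1 z)) ?_ ?_).trans (Jf_mono p (hgnle n))
    · refine ne_top_of_le_ne_top hBf ?_
      rw [← lintegral_indicator_one measurableSet_closedBall]
      refine lintegral_mono fun x => ?_
      exact Set.indicator_le_indicator (hg1 x)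
    · unfold Mf
      refine ne_top_of_le_ne_top (b := ENNReal.ofReal ((n:ℝ)^2) * volume (Metric.closedBall (0 : Eucl (m+1)) n)) (ENNReal.mul_ne_top ENNReal.ofReal_ne_top hBf) ?_
      rw [← setLIntegral_const, ← lintegral_indicator measurableSet_closedBall]
      refine lintegral_mono fun x => ?_
      by_cases hx : x ∈ Metric.closedBall (0 : Eucl (m+1)) n
      · simp only [hgn, Set.indicator_of_mem hx]
        refine (mul_le_of_le_one_left zero_le (hg1 x)).trans ?_
        apply ENNReal.ofReal_le_ofReal
        simp only [Metric.mem_closedBall, dist_zero_right] at hx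
        gcongr
      · simp [hgn, Set.indicator_of_notMem hx]
  refine le_of_tendsto' (ENNReal.Tendsto.mul_const (((ENNReal.continuous_pow _).tendsto _).comp
    (ENNReal.Tendsto.div_const hlim (Or.inr hω0))) (Or.inl ?_)) hn
  apply pow_ne_zero
  simp only [ne_eq, ENNReal.div_eq_zero_iff, not_or]; exact ⟨h0, hωt⟩

end

end PartE

section PartF

open MeasureTheory Set Filter Topology
open scoped ENNReal

noncomputable section

abbrev Mx (k n : ℕ) := Matrix (Fin k) (Fin n) ℝ

instance instMeasureSpaceMx (k n : ℕ) : MeasureSpace (Mx k n) :=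
  inferInstanceAs (MeasureSpace (Fin k → Fin n → ℝ))

instance instBorelMx (k n : ℕ) : BorelSpace (Mx k n) :=
  inferInstanceAs (BorelSpace (Fin k → Fin n → ℝ))

instance instSecondMx (k n : ℕ) : SecondCountableTopology (Mx k n) :=
  inferInstanceAs (SecondCountableTopology (Fin k → Fin n → ℝ))

instance instSigmaMx (k n : ℕ) : SigmaFinite (volume : Measure (Mx k n)) :=
  inferInstanceAs (SigmaFinite (volume : Measure (Fin k → Fin n → ℝ)))

instance instInvMx (k n : ℕ) : (volume : Measure (Mx k n)).IsAddLeftInvariant :=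
  inferInstanceAs ((volume : Measure (Fin k → Fin n → ℝ)).IsAddLeftInvariant)

instance instLocFinMx (k n : ℕ) : IsLocallyFiniteMeasure (volume : Measure (Mx k n)) :=
  inferInstanceAs (IsLocallyFiniteMeasure (volume : Measure (Fin k → Fin n → ℝ)))

instance instOpenPosMx (k n : ℕ) : (volume : Measure (Mx k n)).IsOpenPosMeasure :=
  inferInstanceAs ((volume : Measure (Fin k → Fin n → ℝ)).IsOpenPosMeasure)

lemma cov_Mx' {k n : ℕ} (L : (Fin k → Fin n → ℝ) →ₗ[ℝ] (Fin k → Fin n → ℝ)) (hL : LinearMap.det L ≠ 0)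
    (u : (Fin k → Fin n → ℝ) → ℝ≥0∞) (hu : Measurable u) :
    ∫⁻ X, u (L X) = ENNReal.ofReal (|LinearMap.det L|⁻¹) * ∫⁻ X, u X := by
  have h := Measure.map_linearMap_addHaar_eq_smul_addHaar (volume : Measure (Fin k → Fin n → ℝ)) hL
  have hm : Measurable L := (LinearMap.continuous_of_finiteDimensional L).measurable
  rw [← lintegral_map (μ := volume) hu hm, h, lintegral_smul_measure, abs_inv]
  rfl

lemma cov_Mx {k n : ℕ} (L : Mx k n →ₗ[ℝ] Mx k n) (hL : LinearMap.det L ≠ 0)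
    (u : Mx k n → ℝ≥0∞) (hu : Measurable u) :
    ∫⁻ X, u (L X) = ENNReal.ofReal (|LinearMap.det L|⁻¹) * ∫⁻ X, u X :=
  cov_Mx' L hL u hu

def rmulL {k n : ℕ} (B : Mx n n) : Mx k n →ₗ[ℝ] Mx k n where
  toFun X := X * B
  map_add' X Y := Matrix.add_mul X Y B
  map_smul' c X := Matrix.smul_mul c X B

def lmulL {k n : ℕ} (A : Mx k k) : Mx k n →ₗ[ℝ] Mx k n where
  toFun X := A * X
  map_add' X Y := Matrix.mul_add A X Y
  map_smul' c X := Matrix.mul_smul A c X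

lemma det_rmulL {k n : ℕ} (B : Mx n n) : LinearMap.det (rmulL (k := k) B) = B.det ^ k := by
  have h := LinearMap.det_pi (ι := Fin k) (R := ℝ) (fun _ : Fin k => Matrix.toLin' B.transpose)
  rw [Finset.prod_const, Finset.card_univ, Fintype.card_fin, LinearMap.det_toLin', Matrix.det_transpose] at h
  rw [← h]
  congr 1
  refine LinearMap.ext fun X => ?_
  funext i j
  change (X * B) i j = (Matrix.toLin' B.transpose (X i)) j
  simp [Matrix.mul_apply, Matrix.mulVec, dotProduct, mul_comm]

lemma det_lmulL {k n : ℕ} (A : Mx k k) : LinearMap.det (lmulL (n := n) A) = A.det ^ n := by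
  have h := det_rmulL (k := n) A.transpose
  rw [Matrix.det_transpose] at h
  rw [← h, ← LinearMap.det_conj (lmulL (n := n) A) (Matrix.transposeLinearEquiv (Fin k) (Fin n) ℝ ℝ)]
  congr 1
  refine LinearMap.ext fun X => ?_
  simp [lmulL, rmulL, Matrix.transpose_mul]

lemma rmul_cov {k n : ℕ} (B : Mx n n) (hB : B.det ≠ 0) (u : Mx k n → ℝ≥0∞) (hu : Measurable u) :
    ∫⁻ X : Mx k n, u (X * B) = ENNReal.ofReal (|B.det|⁻¹ ^ k) * ∫⁻ X, u X := by
  have := cov_Mx (rmulL (k := k) B) (by rw [det_rmulL]; exact pow_ne_zero _ hB) u hu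
  rw [det_rmulL, abs_pow, ← inv_pow] at this
  exact this

lemma lmul_cov {k n : ℕ} (A : Mx k k) (hA : A.det ≠ 0) (u : Mx k n → ℝ≥0∞) (hu : Measurable u) :
    ∫⁻ X : Mx k n, u (A * X) = ENNReal.ofReal (|A.det|⁻¹ ^ n) * ∫⁻ X, u X := by
  have := cov_Mx (lmulL (n := n) A) (by rw [det_lmulL]; exact pow_ne_zero _ hA) u hu
  rw [det_lmulL, abs_pow, ← inv_pow] at this
  exact this

/-- the `k × n` matrix `[I 0]` -/
def Pm (k n : ℕ) : Mx k n := fun i j => if (i : ℕ) = j then 1 else 0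

lemma Pm_mul_transpose {k n : ℕ} (hkn : k ≤ n) : Pm k n * (Pm k n).transpose = 1 := by
  ext i j
  rw [Matrix.mul_apply, Finset.sum_eq_single (Fin.castLE hkn i)]
  · simp [Pm, Matrix.one_apply, Fin.ext_iff, eq_comm]
  · intro b _ hb
    have : (i : ℕ) ≠ b := fun h => hb (Fin.ext h.symm)
    simp [Pm, this]
  · simp

def gd {k n : ℕ} (X : Mx k n) : ℝ := (X * X.transpose).det

lemma continuous_gd {k n : ℕ} : Continuous (gd (k := k) (n := n)) := by
  unfold gd
  fun_prop

lemma gd_line {k n : ℕ} (hkn : k ≤ n) (X : Mx k n) : {t : ℝ | gd (X + t • Pm k n) = 0}.Finite := by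
  set M : Matrix (Fin k) (Fin n) (Polynomial ℝ) := X.map Polynomial.C + (Polynomial.X : Polynomial ℝ) • (Pm k n).map Polynomial.C
  set q := (M * M.transpose).det with hq
  have hev : ∀ t, q.eval t = gd (X + t • Pm k n) := by
    intro t
    rw [hq, ← Polynomial.coe_evalRingHom, RingHom.map_det]
    unfold gd
    congr 1
    rw [RingHom.mapMatrix_apply, Matrix.map_mul, Matrix.transpose_map]
    have : M.map (Polynomial.evalRingHom t) = X + t • Pm k n := by
      ext i j; simp [M]; ring
    rw [← this]
  have hne : q ≠ 0 := by
    intro h0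
    have h1 : ∀ s : ℝ, s ≠ 0 → gd (s • X + Pm k n) = 0 := by
      intro s hs
      have e : s • X + Pm k n = s • (X + s⁻¹ • Pm k n) := by
        rw [smul_add, smul_smul, mul_inv_cancel₀ hs, one_smul]
      have h2 : gd (X + s⁻¹ • Pm k n) = 0 := by rw [← hev, h0]; simp
      rw [e]
      unfold gd at h2 ⊢
      rw [Matrix.transpose_smul, Matrix.smul_mul, Matrix.mul_smul, Matrix.det_smul, Matrix.det_smul, h2]; simp
    have h3 : Tendsto (fun s : ℝ => gd (s • X + Pm k n)) (𝓝[≠] 0) (𝓝 (gd ((0:ℝ) • X + Pm k n))) := by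
      apply Tendsto.mono_left _ nhdsWithin_le_nhds
      have : Continuous fun s : ℝ => gd (s • X + Pm k n) := continuous_gd.comp (by fun_prop)
      exact this.tendsto 0
    have h4 : Tendsto (fun s : ℝ => gd (s • X + Pm k n)) (𝓝[≠] 0) (𝓝 0) := by
      refine tendsto_const_nhds.congr' ?_
      filter_upwards [self_mem_nhdsWithin] with s hs
      exact (h1 s hs).symm
    have := tendsto_nhds_unique h3 h4
    rw [zero_smul, zero_add, gd, Pm_mul_transpose hkn] at this
    simp at this
  refine (q.roots.toFinset.finite_toSet).subset fun t ht => ?_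
  simp only [Finset.mem_coe, Multiset.mem_toFinset, Polynomial.mem_roots hne, Polynomial.IsRoot]
  rw [hev]; exact ht

lemma gd_ae {k n : ℕ} (hkn : k ≤ n) : ∀ᵐ X : Mx k n, gd X ≠ 0 := by
  set N := {X : Mx k n | gd X = 0} with hN
  have hNm : MeasurableSet N := continuous_gd.measurable (measurableSet_singleton 0)
  rw [ae_iff]
  have e : {a : Mx k n | ¬ gd a ≠ 0} = N := by ext; simp [hN]
  rw [e]
  have hc : Continuous fun z : ℝ × Mx k n => z.1 • Pm k n + z.2 := by fun_prop
  have hu : Measurable fun z : ℝ × Mx k n => N.indicator (1 : Mx k n → ℝ≥0∞) (z.1 • Pm k n + z.2) :=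
    (measurable_one.indicator hNm).comp hc.measurable
  have h1 : ∫⁻ t : ℝ in Icc 0 1, ∫⁻ X : Mx k n, N.indicator (1 : Mx k n → ℝ≥0∞) (t • Pm k n + X) = volume N := by
    have : ∀ t : ℝ, ∫⁻ X : Mx k n, N.indicator (1 : Mx k n → ℝ≥0∞) (t • Pm k n + X) = volume N := by
      intro t
      rw [lintegral_add_left_eq_self, lintegral_indicator_one hNm]
    simp_rw [this]
    simp
  have h2 : ∀ X : Mx k n, ∫⁻ t : ℝ in Icc 0 1, N.indicator (1 : Mx k n → ℝ≥0∞) (t • Pm k n + X) = 0 := by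
    intro X
    have h3 : ∀ᵐ t : ℝ, t ∉ {t : ℝ | gd (X + t • Pm k n) = 0} :=
      measure_eq_zero_iff_ae_notMem.1 ((gd_line hkn X).measure_zero _)
    have h4 : (fun t : ℝ => N.indicator (1 : Mx k n → ℝ≥0∞) (t • Pm k n + X)) =ᵐ[volume.restrict (Icc 0 1)] fun _ => 0 := by
      refine ae_restrict_of_ae ?_
      filter_upwards [h3] with t ht
      rw [indicator_of_notMem]
      rw [add_comm]; exact ht
    rw [lintegral_congr_ae h4, lintegral_zero]
  calc volume N = ∫⁻ t : ℝ in Icc 0 1, ∫⁻ X : Mx k n, N.indicator (1 : Mx k n → ℝ≥0∞) (t • Pm k n + X) := h1.symm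
    _ = ∫⁻ X : Mx k n, ∫⁻ t : ℝ in Icc 0 1, N.indicator (1 : Mx k n → ℝ≥0∞) (t • Pm k n + X) :=
      lintegral_lintegral_swap hu.aemeasurable
    _ = ∫⁻ X : Mx k n, 0 := lintegral_congr h2
    _ = 0 := lintegral_zero

end

end PartF

section PartG

open MeasureTheory Set Filter Topology
open scoped ENNReal

noncomputable section

lemma decomp {k n : ℕ} (hkn : k ≤ n) (X : Mx k n) (hX : gd X ≠ 0) :
    ∃ (Y : Mx k k) (h : OG n), Y.det ≠ 0 ∧ X = Y * Pm k n * (h : Mx n n) ∧ Real.sqrt (gd X) = |Y.det| := by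
  have hps : (X * X.transpose).PosSemidef := by
    have := Matrix.posSemidef_self_mul_conjTranspose X
    rwa [Matrix.conjTranspose_eq_transpose_of_trivial] at this
  obtain ⟨B, hB⟩ : ∃ B : Mx k k, X * X.transpose = B.transpose * B := by
    open scoped MatrixOrder Matrix.Norms.L2Operator in
    obtain ⟨B, hB⟩ := CStarAlgebra.nonneg_iff_eq_star_mul_self.mp hps.nonneg
    exact ⟨B, by rw [hB, Matrix.star_eq_conjTranspose, Matrix.conjTranspose_eq_transpose_of_trivial]⟩
  set Y := B.transpose with hY
  have hB' : B = Y.transpose := by rw [hY, Matrix.transpose_transpose]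
  rw [hB'] at hB
  have hg : gd X = Y.det ^ 2 := by
    rw [gd, hB, Matrix.det_mul, Matrix.det_transpose Y, sq]
  have hYd : Y.det ≠ 0 := by
    intro h; rw [h] at hg; exact hX (by rw [hg]; simp)
  have hYu : IsUnit Y.det := isUnit_iff_ne_zero.2 hYd
  set U := Y⁻¹ * X with hU
  have hUU : U * U.transpose = 1 := by
    rw [hU, Matrix.transpose_mul, Matrix.mul_assoc, ← Matrix.mul_assoc X, hB, Matrix.mul_assoc Y,
      ← Matrix.mul_assoc, Matrix.nonsing_inv_mul _ hYu, Matrix.one_mul, ← Matrix.transpose_mul,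
      Matrix.nonsing_inv_mul _ hYu, Matrix.transpose_one]
  -- orthonormal extension
  set v : Fin n → Eucl n := fun i => if h : (i : ℕ) < k then WithLp.toLp 2 (U ⟨i, h⟩) else 0 with hv
  have hon : Orthonormal ℝ (Set.domRestrict {i : Fin n | (i : ℕ) < k} v) := by
    rw [orthonormal_iff_ite]
    rintro ⟨i, hi⟩ ⟨j, hj⟩
    have hi' : (i : ℕ) < k := hi
    have hj' : (j : ℕ) < k := hj
    have h1 := congrFun (congrFun hUU ⟨i, hi'⟩) ⟨j, hj'⟩
    rw [Matrix.mul_apply] at h1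
    simp only [Set.domRestrict_apply, hv, dif_pos hi', dif_pos hj', PiLp.inner_apply]
    simp only [Matrix.transpose_apply, Matrix.one_apply, Fin.mk.injEq] at h1
    simp only [Subtype.mk.injEq, Fin.ext_iff]
    rw [← h1]
    refine Finset.sum_congr rfl fun l _ => ?_
    simp [mul_comm]
  obtain ⟨b, hb⟩ := hon.exists_orthonormalBasis_extension_of_card_eq (by simp)
  set H : Mx n n := fun i j => b i j with hH
  have hHm : H ∈ Matrix.orthogonalGroup (Fin n) ℝ := by
    rw [Matrix.mem_orthogonalGroup_iff]
    ext i j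
    have := (orthonormal_iff_ite.1 b.orthonormal) i j
    rw [Matrix.mul_apply, Matrix.one_apply, ← this, PiLp.inner_apply]
    refine Finset.sum_congr rfl fun l _ => ?_
    change b i l * b j l = _
    simp [mul_comm]
  refine ⟨Y, ⟨H, hHm⟩, hYd, ?_, ?_⟩
  · have hPH : Pm k n * H = U := by
      ext i j
      rw [Matrix.mul_apply, Finset.sum_eq_single (Fin.castLE hkn i)]
      · have : b (Fin.castLE hkn i) = v (Fin.castLE hkn i) := hb _ (by simp)
        simp only [Pm, hH, this, hv]
        simp
      · intro c _ hc
        have : (i : ℕ) ≠ c := fun h => hc (Fin.ext h.symm)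
        simp [Pm, this]
      · simp
    change X = Y * Pm k n * H
    rw [Matrix.mul_assoc, hPH, hU, ← Matrix.mul_assoc, Matrix.mul_nonsing_inv _ hYu, Matrix.one_mul]
  · rw [hg, Real.sqrt_sq_eq_abs]

instance instBorelOG (n : ℕ) : BorelSpace (OG n) := ⟨rfl⟩

instance instSecOG (n : ℕ) : SecondCountableTopology (OG n) :=
  TopologicalSpace.Subtype.secondCountableTopology _

lemma gd_mul_OG {k n : ℕ} (X : Mx k n) (g : OG n) : (X * (g : Mx n n)) * (X * (g : Mx n n)).transpose = X * X.transpose := by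
  have h := (Matrix.mem_orthogonalGroup_iff (Fin n) ℝ).1 g.2
  rw [Matrix.transpose_mul, Matrix.mul_assoc, ← Matrix.mul_assoc (g : Mx n n)]
  have h2 : (g : Mx n n) * (g : Mx n n).transpose = 1 := h
  rw [h2, Matrix.one_mul]

def phi {k n : ℕ} (X : Mx k n) : ℝ≥0∞ :=
  {X : Mx k n | gd X ≠ 0 ∧ (X * X.transpose).adjugate.trace ≤ gd X}.indicator
    (fun X => ENNReal.ofReal ((Real.sqrt (gd X))⁻¹ ^ k)) X

lemma phi_OG {k n : ℕ} (X : Mx k n) (g : OG n) : phi (X * (g : Mx n n)) = phi X := by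
  have h := gd_mul_OG X g
  have h2 : gd (X * (g : Mx n n)) = gd X := by unfold gd; rw [h]
  unfold phi
  simp only [indicator, mem_ofPred_eq, h, h2]

lemma measurable_phi {k n : ℕ} : Measurable (phi (k := k) (n := n)) := by
  unfold phi
  have hg := (continuous_gd (k := k) (n := n)).measurable
  refine Measurable.indicator ?_ ?_
  · exact ((hg.sqrt.inv).pow_const _).ennreal_ofReal
  · refine MeasurableSet.inter ?_ ?_
    · exact (hg (measurableSet_singleton 0)).compl
    · refine measurableSet_le ?_ hg
      have : Continuous fun X : Mx k n => (X * X.transpose).adjugate.trace := by fun_prop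
      exact this.measurable

lemma measurable_invMx {k : ℕ} : Measurable fun A : Mx k k => A⁻¹ := by
  have e : (fun A : Mx k k => A⁻¹) = (fun z : ℝ × Mx k k => z.1 • z.2) ∘ fun A => ((A.det)⁻¹, A.adjugate) := by
    funext A
    simp [Matrix.inv_def]
  rw [e]
  have h1 : Continuous (fun z : ℝ × Mx k k => z.1 • z.2) := by fun_prop
  have h2 : Continuous fun A : Mx k k => A.det := by fun_prop
  have h3 : Continuous fun A : Mx k k => A.adjugate := by fun_prop
  exact h1.measurable.comp (h2.measurable.inv.prodMk h3.measurable)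

/-- the weight `|det A|^p` -/
def wt {k : ℕ} (p : ℕ) (A : Mx k k) : ℝ≥0∞ := ENNReal.ofReal (|A.det| ^ p)

lemma measurable_wt {k : ℕ} (p : ℕ) : Measurable (wt (k := k) p) := by
  have h2 : Continuous fun A : Mx k k => |A.det| ^ p := by fun_prop
  exact h2.measurable.ennreal_ofReal

lemma wt_mul {k : ℕ} (p : ℕ) (A B : Mx k k) : wt p (A * B) = wt p A * wt p B := by
  unfold wt
  rw [Matrix.det_mul, abs_mul, mul_pow, ENNReal.ofReal_mul (by positivity)]

def If {k n : ℕ} (p : ℕ) (F : Mx k n → ℝ≥0∞) (X : Mx k n) : ℝ≥0∞ := ∫⁻ A : Mx k k, F (A * X) * wt p A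

lemma measurable_If {k n : ℕ} (p : ℕ) {F : Mx k n → ℝ≥0∞} (hF : Measurable F) : Measurable (If p F) := by
  unfold If
  have hc : Continuous fun z : Mx k n × Mx k k => z.2 * z.1 := by fun_prop
  exact Measurable.lintegral_prod_right ((hF.comp hc.measurable).mul ((measurable_wt p).comp measurable_snd))

lemma If_mul {k n : ℕ} (p : ℕ) {F : Mx k n → ℝ≥0∞} (hF : Measurable F) (Y : Mx k k) (hY : Y.det ≠ 0) (X : Mx k n) :
    If p F (Y * X) = ENNReal.ofReal (|Y.det|⁻¹ ^ (k + p)) * If p F X := by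
  have hc : Continuous fun A : Mx k k => A * X := by fun_prop
  have h := rmul_cov Y hY (fun A : Mx k k => F (A * X) * wt p A)
    ((hF.comp hc.measurable).mul (measurable_wt p))
  have hc2 : Continuous fun A : Mx k k => A * (Y * X) := by fun_prop
  have h2 : ∫⁻ A : Mx k k, F (A * Y * X) * wt p (A * Y) = If p F (Y * X) * wt p Y := by
    unfold If
    refine Eq.trans ?_ (lintegral_mul_const _ ((hF.comp hc2.measurable).mul (measurable_wt p)))
    refine lintegral_congr fun A => ?_
    rw [wt_mul, Matrix.mul_assoc, ← mul_assoc]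
  rw [h2] at h
  have hp : 0 < |Y.det| := abs_pos.2 hY
  have h3 : wt p Y * ENNReal.ofReal (|Y.det|⁻¹ ^ p) = 1 := by
    unfold wt
    rw [← ENNReal.ofReal_mul (by positivity), ← mul_pow, mul_inv_cancel₀ hp.ne']; simp
  calc If p F (Y * X) = If p F (Y * X) * wt p Y * ENNReal.ofReal (|Y.det|⁻¹ ^ p) := by
        rw [mul_assoc, h3, mul_one]
    _ = _ := by
        rw [h, pow_add, ENNReal.ofReal_mul (by positivity)]
        unfold If
        ring

lemma OG_abs_det {n : ℕ} (g : OG n) : |(g : Mx n n).det| = 1 := by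
  have h := (Matrix.mem_orthogonalGroup_iff (Fin n) ℝ).1 g.2
  have h2 : (g : Mx n n) * (g : Mx n n).transpose = 1 := h
  have h3 := congrArg Matrix.det h2
  rw [Matrix.det_mul, Matrix.det_transpose, Matrix.det_one] at h3
  have : |(g : Mx n n).det| ^ 2 = 1 := by rw [sq_abs, sq, h3]
  exact (pow_eq_one_iff_of_nonneg (abs_nonneg _) two_ne_zero).1 this

lemma rmul_OG {k n : ℕ} (g : OG n) (u : Mx k n → ℝ≥0∞) (hu : Measurable u) :
    ∫⁻ X : Mx k n, u (X * (g : Mx n n)) = ∫⁻ X, u X := by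
  have h := OG_abs_det g
  rw [rmul_cov _ (by intro h0; rw [h0] at h; simp at h) u hu, h]
  simp

end

end PartG

section PartH

open MeasureTheory Set Filter Topology
open scoped ENNReal

noncomputable section

/-- second evaluation -/
lemma BP_two {k n : ℕ} (hkn : k ≤ n) (ν : Measure (OG n)) [IsProbabilityMeasure ν] [ν.IsMulLeftInvariant]
    {F : Mx k n → ℝ≥0∞} (hF : Measurable F) :
    ∫⁻ X : Mx k n, phi X * If (n - k) F X =
      (∫⁻ X : Mx k n, phi X * ENNReal.ofReal ((Real.sqrt (gd X))⁻¹ ^ n)) *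
        ∫⁻ g, If (n - k) F (Pm k n * (g : Mx n n)) ∂ν := by
  have hI := measurable_If (n - k) hF
  have hgm : Measurable fun g : OG n => (g : Mx n n) := continuous_subtype_val.measurable
  have hcm : Continuous fun z : Mx k n × Mx n n => z.1 * z.2 := by fun_prop
  have hXg : Measurable fun z : OG n × Mx k n => z.2 * (z.1 : Mx n n) :=
    hcm.measurable.comp (measurable_snd.prodMk (hgm.comp measurable_fst))
  have h1 : ∀ g : OG n, ∫⁻ X : Mx k n, phi X * If (n - k) F (X * (g : Mx n n)) = ∫⁻ X : Mx k n, phi X * If (n - k) F X := by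
    intro g
    rw [← rmul_OG g (fun X : Mx k n => phi X * If (n - k) F X) (measurable_phi.mul hI)]
    simp_rw [phi_OG]
  have hm2 : Measurable fun z : OG n × Mx k n => phi z.2 * If (n - k) F (z.2 * (z.1 : Mx n n)) :=
    (measurable_phi.comp measurable_snd).mul (hI.comp hXg)
  have h3 : ∀ X : Mx k n, ∫⁻ g : OG n, phi X * If (n - k) F (X * (g : Mx n n)) ∂ν =
      phi X * ENNReal.ofReal ((Real.sqrt (gd X))⁻¹ ^ n) * ∫⁻ g, If (n - k) F (Pm k n * (g : Mx n n)) ∂ν := by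
    intro X
    by_cases hX : gd X = 0
    · have : phi X = 0 := by
        unfold phi
        rw [indicator_of_notMem]
        exact fun h => h.1 hX
      simp [this]
    obtain ⟨Y, h, hY, hXY, hs⟩ := decomp hkn X hX
    have hmX : ∀ Z : Mx k n, Measurable fun g : OG n => If (n - k) F (Z * (g : Mx n n)) := fun Z =>
      hI.comp (hcm.measurable.comp (measurable_const.prodMk hgm))
    rw [lintegral_const_mul _ (hmX X), mul_assoc]
    congr 1
    have e1 : ∀ g : OG n, If (n - k) F (X * (g : Mx n n)) =
        ENNReal.ofReal ((Real.sqrt (gd X))⁻¹ ^ n) * If (n - k) F (Pm k n * ((h * g : OG n) : Mx n n)) := by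
      intro g
      have : X * (g : Mx n n) = Y * (Pm k n * ((h * g : OG n) : Mx n n)) := by
        conv_lhs => rw [hXY]
        simp only [Submonoid.coe_mul, Matrix.mul_assoc]
      rw [this, If_mul _ hF Y hY, hs, Nat.add_sub_cancel' hkn]
    simp_rw [e1]
    rw [lintegral_const_mul]
    · congr 1
      exact lintegral_mul_left_eq_self (μ := ν) (fun g : OG n => If (n - k) F (Pm k n * (g : Mx n n))) h
    · exact (hmX (Pm k n)).comp (measurable_const_mul h)
  calc ∫⁻ X : Mx k n, phi X * If (n - k) F X = ∫⁻ g : OG n, (∫⁻ X : Mx k n, phi X * If (n - k) F X) ∂ν := by simp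
    _ = ∫⁻ g : OG n, (∫⁻ X : Mx k n, phi X * If (n - k) F (X * (g : Mx n n))) ∂ν := by simp_rw [h1]
    _ = ∫⁻ X : Mx k n, (∫⁻ g : OG n, phi X * If (n - k) F (X * (g : Mx n n)) ∂ν) :=
      lintegral_lintegral_swap hm2.aemeasurable
    _ = ∫⁻ X : Mx k n, phi X * ENNReal.ofReal ((Real.sqrt (gd X))⁻¹ ^ n) * ∫⁻ g, If (n - k) F (Pm k n * (g : Mx n n)) ∂ν :=
      lintegral_congr h3
    _ = _ := by
      rw [lintegral_mul_const]
      have hg := (continuous_gd (k := k) (n := n)).measurable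
      exact measurable_phi.mul (((hg.sqrt.inv).pow_const _).ennreal_ofReal)

/-- the bracket -/
def Bk {k n : ℕ} (X : Mx k n) : ℝ≥0∞ :=
  ∫⁻ A : Mx k k, ENNReal.ofReal (|A.det|⁻¹ ^ k) * phi (A⁻¹ * X)

lemma measurable_w {k : ℕ} (p : ℕ) : Measurable fun A : Mx k k => ENNReal.ofReal (|A.det|⁻¹ ^ p) := by
  have h2 : Continuous fun A : Mx k k => |A.det| := by fun_prop
  exact (h2.measurable.inv.pow_const p).ennreal_ofReal

lemma measurable_invmul {k n : ℕ} : Measurable fun z : Mx k k × Mx k n => z.1⁻¹ * z.2 := by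
  have hcm : Continuous fun z : Mx k k × Mx k n => z.1 * z.2 := by fun_prop
  exact hcm.measurable.comp ((measurable_invMx.comp measurable_fst).prodMk measurable_snd)

lemma ae_det {k : ℕ} : ∀ᵐ A : Mx k k, A.det ≠ 0 := by
  filter_upwards [gd_ae (le_refl k)] with A hA h
  apply hA
  rw [gd, Matrix.det_mul, h, zero_mul]

lemma BP_one {k n : ℕ} (hkn : k ≤ n) {F : Mx k n → ℝ≥0∞} (hF : Measurable F) :
    ∫⁻ X : Mx k n, phi X * If (n - k) F X = ∫⁻ X : Mx k n, F X * Bk X := by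
  have hcm : Continuous fun z : Mx k k × Mx k n => z.1 * z.2 := by fun_prop
  have hcm' : Continuous fun z : Mx k n × Mx k k => z.2 * z.1 := by fun_prop
  have h1 : ∀ X : Mx k n, phi X * If (n - k) F X = ∫⁻ A : Mx k k, phi X * (F (A * X) * wt (n - k) A) := by
    intro X
    have hc : Continuous fun A : Mx k k => A * X := by fun_prop
    exact (lintegral_const_mul _ ((hF.comp hc.measurable).mul (measurable_wt (n - k)))).symm
  have hm1 : Measurable fun z : Mx k n × Mx k k => phi z.1 * (F (z.2 * z.1) * wt (n - k) z.2) :=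
    (measurable_phi.comp measurable_fst).mul ((hF.comp hcm'.measurable).mul ((measurable_wt _).comp measurable_snd))
  have h2 : ∀ A : Mx k k, A.det ≠ 0 → ∫⁻ X : Mx k n, phi X * (F (A * X) * wt (n - k) A) =
      ∫⁻ X : Mx k n, F X * (ENNReal.ofReal (|A.det|⁻¹ ^ k) * phi (A⁻¹ * X)) := by
    intro A hA
    have hc : Continuous fun X : Mx k n => A * X := by fun_prop
    have hc2 : Continuous fun X : Mx k n => A⁻¹ * X := by fun_prop
    have hmu : Measurable fun X : Mx k n => F X * phi (A⁻¹ * X) := hF.mul (measurable_phi.comp hc2.measurable)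
    have h := lmul_cov A hA (fun X : Mx k n => F X * phi (A⁻¹ * X)) hmu
    have hAu : IsUnit A.det := isUnit_iff_ne_zero.2 hA
    have hp : 0 < |A.det| := abs_pos.2 hA
    have e : ∀ X : Mx k n, A⁻¹ * (A * X) = X := fun X => by
      rw [← Matrix.mul_assoc, Matrix.nonsing_inv_mul _ hAu, Matrix.one_mul]
    simp only [e] at h
    have hw : wt (n - k) A * ENNReal.ofReal (|A.det|⁻¹ ^ n) = ENNReal.ofReal (|A.det|⁻¹ ^ k) := by
      unfold wt
      rw [← ENNReal.ofReal_mul (by positivity)]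
      congr 1
      obtain ⟨d, rfl⟩ := Nat.exists_eq_add_of_le hkn
      rw [Nat.add_sub_cancel_left, pow_add, mul_left_comm, ← mul_pow, mul_inv_cancel₀ hp.ne']; simp
    calc ∫⁻ X : Mx k n, phi X * (F (A * X) * wt (n - k) A) = ∫⁻ X : Mx k n, wt (n - k) A * (F (A * X) * phi X) :=
          lintegral_congr fun X => by ring
      _ = wt (n - k) A * ∫⁻ X : Mx k n, (F (A * X) * phi X) :=
          lintegral_const_mul _ ((hF.comp hc.measurable).mul measurable_phi)
      _ = ENNReal.ofReal (|A.det|⁻¹ ^ k) * ∫⁻ X : Mx k n, F X * phi (A⁻¹ * X) := by rw [h, ← mul_assoc, hw]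
      _ = ∫⁻ X : Mx k n, ENNReal.ofReal (|A.det|⁻¹ ^ k) * (F X * phi (A⁻¹ * X)) :=
          (lintegral_const_mul _ hmu).symm
      _ = _ := lintegral_congr fun X => by ring
  have hm2 : Measurable fun z : Mx k k × Mx k n => F z.2 * (ENNReal.ofReal (|z.1.det|⁻¹ ^ k) * phi (z.1⁻¹ * z.2)) :=
    (hF.comp measurable_snd).mul (((measurable_w k).comp measurable_fst).mul (measurable_phi.comp measurable_invmul))
  calc ∫⁻ X : Mx k n, phi X * If (n - k) F X = ∫⁻ X : Mx k n, (∫⁻ A : Mx k k, phi X * (F (A * X) * wt (n - k) A)) :=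
        lintegral_congr h1
    _ = ∫⁻ A : Mx k k, (∫⁻ X : Mx k n, phi X * (F (A * X) * wt (n - k) A)) := lintegral_lintegral_swap hm1.aemeasurable
    _ = ∫⁻ A : Mx k k, (∫⁻ X : Mx k n, F X * (ENNReal.ofReal (|A.det|⁻¹ ^ k) * phi (A⁻¹ * X))) :=
        lintegral_congr_ae (by filter_upwards [ae_det] with A hA using h2 A hA)
    _ = ∫⁻ X : Mx k n, (∫⁻ A : Mx k k, F X * (ENNReal.ofReal (|A.det|⁻¹ ^ k) * phi (A⁻¹ * X))) :=
        lintegral_lintegral_swap hm2.aemeasurable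
    _ = _ := lintegral_congr fun X => by
        have := (measurable_w (k := k) k).mul (measurable_phi.comp (measurable_invmul.comp (measurable_id.prodMk (measurable_const (a := X)))))
        exact lintegral_const_mul _ this

lemma measurable_Bint {k n : ℕ} (X : Mx k n) :
    Measurable fun A : Mx k k => ENNReal.ofReal (|A.det|⁻¹ ^ k) * phi (A⁻¹ * X) := by
  have hc : Continuous fun A : Mx k k => A * X := by fun_prop
  have h2 : Measurable fun A : Mx k k => A⁻¹ * X := hc.measurable.comp measurable_invMx
  exact (measurable_w k).mul (measurable_phi.comp h2)

lemma Bk_const {k n : ℕ} (hkn : k ≤ n) (X : Mx k n) (hX : gd X ≠ 0) : Bk X = Bk (Pm k n) := by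
  obtain ⟨Y, h, hY, hXY, hs⟩ := decomp hkn X hX
  have hp : 0 < |Y.det| := abs_pos.2 hY
  have hYu : IsUnit Y.det := isUnit_iff_ne_zero.2 hY
  have e1 : Bk X = Bk (Y * Pm k n) := by
    unfold Bk
    refine lintegral_congr fun A => ?_
    rw [hXY, ← Matrix.mul_assoc, phi_OG]
  have h2 := lmul_cov Y hY (fun A : Mx k k => ENNReal.ofReal (|A.det|⁻¹ ^ k) * phi (A⁻¹ * (Y * Pm k n))) (measurable_Bint _)
  have h3 : ∫⁻ A : Mx k k, ENNReal.ofReal (|(Y * A).det|⁻¹ ^ k) * phi ((Y * A)⁻¹ * (Y * Pm k n)) =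
      ENNReal.ofReal (|Y.det|⁻¹ ^ k) * Bk (Pm k n) := by
    unfold Bk
    refine Eq.trans ?_ (lintegral_const_mul _ (measurable_Bint _))
    refine lintegral_congr fun A => ?_
    rw [Matrix.mul_inv_rev, Matrix.mul_assoc, ← Matrix.mul_assoc Y⁻¹, Matrix.nonsing_inv_mul _ hYu, Matrix.one_mul,
      Matrix.det_mul, abs_mul, mul_inv, mul_pow, ENNReal.ofReal_mul (by positivity), mul_assoc]
  rw [h3] at h2
  have hc0 : ENNReal.ofReal (|Y.det|⁻¹ ^ k) ≠ 0 := by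
    simp only [ne_eq, ENNReal.ofReal_eq_zero, not_le]; positivity
  rw [e1]
  exact ((ENNReal.mul_right_inj hc0 ENNReal.ofReal_ne_top).1 h2).symm

lemma trace_self {k : ℕ} (A : Mx k k) : (A.transpose * A).trace = ∑ j, ∑ i, A i j ^ 2 := by
  simp [Matrix.trace, Matrix.mul_apply, sq]

lemma Bk_Pm {k n : ℕ} (hkn : k ≤ n) : Bk (Pm k n) = volume {A : Mx k k | (A.transpose * A).trace ≤ 1} := by
  have hc : Continuous fun A : Mx k k => (A.transpose * A).trace := by fun_prop
  have hmS : MeasurableSet {A : Mx k k | (A.transpose * A).trace ≤ 1} :=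
    measurableSet_le hc.measurable measurable_const
  rw [← lintegral_indicator_one hmS]
  unfold Bk
  refine lintegral_congr_ae ?_
  filter_upwards [ae_det] with A hA
  have hAu : IsUnit A.det := isUnit_iff_ne_zero.2 hA
  have hp : 0 < |A.det| := abs_pos.2 hA
  set S := (A⁻¹ * Pm k n) * (A⁻¹ * Pm k n).transpose with hS
  have hS' : S = A⁻¹ * A⁻¹.transpose := by
    rw [hS, Matrix.transpose_mul, Matrix.mul_assoc, ← Matrix.mul_assoc (Pm k n), Pm_mul_transpose hkn, Matrix.one_mul]
  have hd : S.det = (A.det⁻¹) ^ 2 := by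
    rw [hS', Matrix.det_mul, Matrix.det_transpose, Matrix.det_nonsing_inv, Ring.inverse_eq_inv', sq]
  have hd0 : 0 < S.det := by rw [hd]; positivity
  have hgd : gd (A⁻¹ * Pm k n) = S.det := rfl
  have hsq : Real.sqrt (S.det) = |A.det|⁻¹ := by rw [hd, Real.sqrt_sq_eq_abs, abs_inv]
  have hinv : S⁻¹ = A.transpose * A := by
    rw [hS', Matrix.mul_inv_rev, Matrix.transpose_nonsing_inv, Matrix.nonsing_inv_nonsing_inv _ hAu,
      Matrix.nonsing_inv_nonsing_inv]
    rwa [Matrix.det_transpose]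
  have hadj : S.adjugate.trace = S.det * (A.transpose * A).trace := by
    rw [← hinv, Matrix.inv_def, Matrix.trace_smul, Ring.inverse_eq_inv', smul_eq_mul, ← mul_assoc, mul_inv_cancel₀ hd0.ne', one_mul]
  unfold phi
  simp only [indicator, mem_ofPred_eq, hgd, ← hS, hadj, hsq]
  have hiff : (S.det ≠ 0 ∧ S.det * (A.transpose * A).trace ≤ S.det) ↔ (A.transpose * A).trace ≤ 1 := by
    constructor
    · rintro ⟨_, h⟩
      exact le_of_mul_le_mul_left (by rwa [mul_one]) hd0
    · intro h
      exact ⟨hd0.ne', by nlinarith⟩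
  by_cases hh : (A.transpose * A).trace ≤ 1
  · rw [if_pos (hiff.2 hh), if_pos hh, ← ENNReal.ofReal_mul (by positivity), ← mul_pow, inv_inv, inv_mul_cancel₀ hp.ne']
    simp
  · rw [if_neg (fun h => hh (hiff.1 h)), if_neg hh, mul_zero]

lemma Bk_pos {k : ℕ} : volume {A : Mx k k | (A.transpose * A).trace ≤ 1} ≠ 0 := by
  have hc : Continuous fun A : Mx k k => (A.transpose * A).trace := by fun_prop
  have ho : IsOpen {A : Mx k k | (A.transpose * A).trace < 1} := isOpen_lt hc continuous_const
  have hne : {A : Mx k k | (A.transpose * A).trace < 1}.Nonempty := ⟨0, by simp⟩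
  have h := (ho.measure_pos volume hne)
  exact (h.trans_le (measure_mono fun A (hA : (A.transpose * A).trace < 1) => (le_of_lt hA : (A.transpose * A).trace ≤ 1))).ne'

lemma Bk_fin {k : ℕ} : volume {A : Mx k k | (A.transpose * A).trace ≤ 1} ≠ ∞ := by
  have hK : IsCompact (Set.pi univ fun _ : Fin k => Set.pi univ fun _ : Fin k => Icc (-1 : ℝ) 1) :=
    isCompact_univ_pi fun _ => isCompact_univ_pi fun _ => isCompact_Icc
  have h1 : volume (Set.pi univ fun _ : Fin k => Set.pi univ fun _ : Fin k => Icc (-1 : ℝ) 1) < ∞ := hK.measure_lt_top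
  refine (lt_of_le_of_lt (measure_mono ?_) h1).ne
  intro (A : Mx k k) hA i _ j _
  have hA' : (A.transpose * A).trace ≤ 1 := hA
  rw [trace_self] at hA'
  have h2 : A i j ^ 2 ≤ ∑ j, ∑ i, A i j ^ 2 :=
    (Finset.single_le_sum (f := fun i => A i j ^ 2) (fun _ _ => sq_nonneg _) (Finset.mem_univ i)).trans
      (Finset.single_le_sum (f := fun j => ∑ i, A i j ^ 2) (fun _ _ => Finset.sum_nonneg fun _ _ => sq_nonneg _) (Finset.mem_univ j))
  exact abs_le.1 ((sq_le_one_iff_abs_le_one _).1 (h2.trans hA'))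

/-- Blaschke-Petkantschin formula -/
lemma BP {k n : ℕ} (hkn : k ≤ n) (ν : Measure (OG n)) [IsProbabilityMeasure ν] [ν.IsMulLeftInvariant] :
    ∃ c : ℝ≥0∞, ∀ F : Mx k n → ℝ≥0∞, Measurable F →
      ∫⁻ X, F X = c * ∫⁻ g, If (n - k) F (Pm k n * (g : Mx n n)) ∂ν := by
  set V := volume {A : Mx k k | (A.transpose * A).trace ≤ 1} with hV
  refine ⟨V⁻¹ * (∫⁻ X : Mx k n, phi X * ENNReal.ofReal ((Real.sqrt (gd X))⁻¹ ^ n)), fun F hF => ?_⟩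
  rw [mul_assoc, ← BP_two hkn ν hF, BP_one hkn hF]
  have : ∫⁻ X : Mx k n, F X * Bk X = ∫⁻ X : Mx k n, F X * V := by
    refine lintegral_congr_ae ?_
    filter_upwards [gd_ae hkn] with X hX
    rw [Bk_const hkn X hX, Bk_Pm hkn]
  rw [this, lintegral_mul_const _ hF, mul_comm, mul_assoc, ENNReal.mul_inv_cancel Bk_pos Bk_fin, mul_one]

end

end PartH

section PartI

open MeasureTheory Set Filter Topology
open scoped ENNReal

noncomputable section

lemma memQ0_bdd {n : ℕ} {f : Eucl n → ℝ} (hf : MemQ0 f) : BddAbove (range f) := by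
  obtain ⟨h0, hlc, husc, hfint, hpos⟩ := hf
  have hex : ∃ ε : ℝ, 0 < ε ∧ volume {x | ε ≤ f x} ≠ 0 := by
    by_contra! hcon
    have h1 : ∀ᵐ x, f x = 0 := by
      have : ∀ᵐ x, ∀ m : ℕ, ¬ (1 / ((m : ℝ) + 1) ≤ f x) := by
        rw [ae_all_iff]
        intro m
        rw [ae_iff]
        simpa using hcon (1 / ((m : ℝ) + 1)) (by positivity)
      filter_upwards [this] with x hx
      by_contra hne
      have hp : 0 < f x := lt_of_le_of_ne (h0 x) (Ne.symm hne)
      obtain ⟨m, hm⟩ := exists_nat_one_div_lt hp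
      exact hx m hm.le
    have : ∫ x, f x = 0 := by
      rw [integral_congr_ae (g := fun _ => (0:ℝ)) h1]; simp
    linarith
  obtain ⟨ε, hε, hμ⟩ := hex
  set S := {x | ε ≤ f x} with hS
  have hconv : Convex ℝ S := by
    rw [convex_iff_forall_pos]
    intro x hx y hy a b ha hb hab
    have hx' : ε ≤ f x := hx
    have hy' : ε ≤ f y := hy
    have hb' : b = 1 - a := by linarith
    have h := hlc x y a ha (by linarith)
    rw [← hb'] at h
    change ε ≤ _
    refine le_trans ?_ h
    calc ε = ε ^ a * ε ^ b := by rw [← Real.rpow_add hε, hab, Real.rpow_one]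
      _ ≤ f x ^ a * f y ^ b := mul_le_mul (Real.rpow_le_rpow hε.le hx' ha.le) (Real.rpow_le_rpow hε.le hy' hb.le)
          (by positivity) (Real.rpow_nonneg (h0 x) _)
  have hinter : (interior S).Nonempty := by
    by_contra hne
    rw [not_nonempty_iff_eq_empty] at hne
    apply hμ
    refine measure_mono_null ?_ (hconv.addHaar_frontier volume)
    intro x hx
    rw [frontier, hne, sdiff_empty]
    exact subset_closure hx
  obtain ⟨z, hz⟩ := hinter
  obtain ⟨r, hr, hball⟩ := Metric.isOpen_iff.1 isOpen_interior z hz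
  set v := volume.real (Metric.ball (0 : Eucl n) (r/2)) with hv
  have hvp : 0 < v := by
    rw [hv, measureReal_def]
    exact ENNReal.toReal_pos (Metric.measure_ball_pos _ _ (by positivity)).ne' measure_ball_lt_top.ne
  refine ⟨((∫ x, f x) / v) ^ 2 / ε, ?_⟩
  rintro _ ⟨x, rfl⟩
  set c := Real.sqrt (f x * ε) with hc
  have hsub : Metric.ball ((1/2 : ℝ) • x + (1/2 : ℝ) • z) (r/2) ⊆ {y | c ≤ f y} := by
    intro w hw
    set y := (2:ℝ) • w - x with hy
    have hyS : ε ≤ f y := by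
      suffices hh : y ∈ Metric.ball z r from (interior_subset (hball hh) : y ∈ S)
      rw [Metric.mem_ball, dist_eq_norm] at hw ⊢
      have : y - z = (2:ℝ) • (w - ((1/2 : ℝ) • x + (1/2 : ℝ) • z)) := by
        rw [hy]; module
      rw [this, norm_smul]
      simp only [Real.norm_ofNat]
      linarith
    have h := hlc x y (1/2) (by norm_num) (by norm_num)
    have e : (1/2 : ℝ) • x + (1 - 1/2 : ℝ) • y = w := by rw [hy]; module
    rw [e] at h
    refine le_trans ?_ h
    rw [hc, Real.sqrt_mul (h0 x), Real.sqrt_eq_rpow, Real.sqrt_eq_rpow]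
    have e2 : (1 - 1/2 : ℝ) = 1/2 := by norm_num
    rw [e2]
    exact mul_le_mul_of_nonneg_left (Real.rpow_le_rpow hε.le hyS (by norm_num)) (Real.rpow_nonneg (h0 x) _)
  have hmk : c * v ≤ ∫ x, f x := by
    by_cases hcp : c = 0
    · rw [hcp, zero_mul]; exact hpos.le
    have hcpos : 0 < c := lt_of_le_of_ne (Real.sqrt_nonneg _) (Ne.symm hcp)
    have hM := mul_meas_ge_le_integral_of_nonneg (μ := volume) (Eventually.of_forall h0) hfint c
    refine le_trans ?_ hM
    refine mul_le_mul_of_nonneg_left ?_ hcpos.le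
    rw [hv, measureReal_def, measureReal_def]
    refine ENNReal.toReal_mono (hfint.measure_ge_lt_top hcpos).ne ?_
    rw [← Measure.addHaar_ball_center volume ((1/2 : ℝ) • x + (1/2 : ℝ) • z)]
    exact measure_mono hsub
  have h3 : c ≤ (∫ x, f x) / v := by rw [le_div_iff₀ hvp]; exact hmk
  have h4 : f x * ε = c ^ 2 := by rw [hc, Real.sq_sqrt (mul_nonneg (h0 x) hε.le)]
  rw [le_div_iff₀ hε, h4]
  exact pow_le_pow_left₀ (Real.sqrt_nonneg _) h3 2

lemma norm_toEuclideanLin {k n : ℕ} (M : Mx n k) (hM : M.transpose * M = 1) (a : Eucl k) :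
    ‖Matrix.toEuclideanLin M a‖ = ‖a‖ := by
  have h : ‖Matrix.toEuclideanLin M a‖ ^ 2 = ‖a‖ ^ 2 := by
    have e : ∀ (d : ℕ) (b : Eucl d), ‖b‖ ^ 2 = b.ofLp ⬝ᵥ b.ofLp := by
      intro d b
      rw [EuclideanSpace.norm_sq_eq, dotProduct]
      simp [sq]
    rw [e, e]
    have : (Matrix.toEuclideanLin M a).ofLp = M.mulVec a.ofLp := rfl
    rw [this, Matrix.dotProduct_mulVec, ← Matrix.mulVec_transpose, Matrix.mulVec_mulVec, hM, Matrix.one_mulVec]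
  exact (pow_left_inj₀ (norm_nonneg _) (norm_nonneg _) two_ne_zero).1 h

def iota {k n : ℕ} (hkn : k ≤ n) : Eucl k →ₗᵢ[ℝ] Eucl n where
  toLinearMap := Matrix.toEuclideanLin (Pm k n).transpose
  norm_map' := norm_toEuclideanLin _ (by rw [Matrix.transpose_transpose]; exact Pm_mul_transpose hkn)

lemma iota_single {k n : ℕ} (hkn : k ≤ n) (i : Fin k) :
    iota hkn (EuclideanSpace.single i 1) = EuclideanSpace.single (Fin.castLE hkn i) 1 := by
  ext j
  change ((Pm k n).transpose.mulVec (EuclideanSpace.single i 1 : Eucl k).ofLp) j = _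
  simp only [Matrix.mulVec, dotProduct, PiLp.single_apply, Matrix.transpose_apply, Pm]
  rw [Finset.sum_eq_single i]
  · simp [Fin.ext_iff, eq_comm]
  · intro b _ hb
    rw [if_neg hb, mul_zero]
  · simp

lemma iota_range {k n : ℕ} (hkn : k ≤ n) : stdSubspace n k = LinearMap.range (iota hkn).toLinearMap := by
  apply le_antisymm
  · refine Submodule.span_le.2 ?_
    rintro _ ⟨i, hi, rfl⟩
    exact ⟨EuclideanSpace.single ⟨i, hi⟩ 1, iota_single hkn ⟨i, hi⟩⟩
  · rintro _ ⟨a, rfl⟩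
    have ha : a = ∑ i, a i • (EuclideanSpace.single i (1:ℝ) : Eucl k) := by
      ext j
      simp [Pi.single_apply]
    rw [ha, map_sum]
    refine Submodule.sum_mem _ fun i _ => ?_
    rw [map_smul]
    refine Submodule.smul_mem _ _ (Submodule.subset_span ⟨Fin.castLE hkn i, i.2, iota_single hkn i⟩)

lemma integral_sub {k n : ℕ} (ι : Eucl k →ₗᵢ[ℝ] Eucl n) (H : Submodule ℝ (Eucl n)) (h : H = LinearMap.range ι.toLinearMap)
    (F : Eucl n → ℝ) : ∫ y : H, F y = ∫ a, F (ι a) := by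
  subst h
  have := ι.equivRange.measurePreserving.integral_comp ι.equivRange.toMeasurableEquiv.measurableEmbedding
    (fun y => F (y : Eucl n))
  rw [← this]
  rfl

end

end PartI

section PartJ

open MeasureTheory Set Filter Topology
open scoped ENNReal

noncomputable section

lemma lintegral_inv_OG {n : ℕ} (ν : Measure (OG n)) [IsProbabilityMeasure ν] [ν.IsMulLeftInvariant]
    (u : OG n → ℝ≥0∞) (hu : Measurable u) : ∫⁻ g, u g⁻¹ ∂ν = ∫⁻ g, u g ∂ν := by
  have hm : Measurable fun z : OG n × OG n => u (z.2⁻¹ * z.1) :=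
    hu.comp ((measurable_inv.comp measurable_snd).mul measurable_fst)
  calc ∫⁻ g, u g⁻¹ ∂ν = ∫⁻ h : OG n, (∫⁻ g, u g⁻¹ ∂ν) ∂ν := by simp
    _ = ∫⁻ h : OG n, (∫⁻ g, u (g⁻¹ * h) ∂ν) ∂ν := by
      refine lintegral_congr fun h => ?_
      rw [← lintegral_mul_left_eq_self (μ := ν) (fun g => u g⁻¹) h⁻¹]
      simp
    _ = ∫⁻ g : OG n, (∫⁻ h, u (g⁻¹ * h) ∂ν) ∂ν := lintegral_lintegral_swap hm.aemeasurable
    _ = ∫⁻ g : OG n, (∫⁻ h, u h ∂ν) ∂ν := by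
      refine lintegral_congr fun g => ?_
      exact lintegral_mul_left_eq_self (μ := ν) u g⁻¹
    _ = ∫⁻ g, u g ∂ν := by simp

/-- product of values at the rows -/
def Fp {k n : ℕ} (q : Eucl n → ℝ≥0∞) (X : Mx k n) : ℝ≥0∞ := ∏ i, q (WithLp.toLp 2 (X i))

lemma continuous_row {k n : ℕ} (i : Fin k) : Continuous fun X : Mx k n => (WithLp.toLp 2 (X i) : Eucl n) :=
  (PiLp.continuous_toLp 2 _).comp (continuous_apply i)

lemma measurable_Fp {k n : ℕ} {q : Eucl n → ℝ≥0∞} (hq : Measurable q) : Measurable (Fp (k := k) q) := by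
  unfold Fp
  exact Finset.measurable_prod _ fun i _ => hq.comp (continuous_row i).measurable

lemma lintegral_Fp {k n : ℕ} {q : Eucl n → ℝ≥0∞} (hq : Measurable q) :
    ∫⁻ X : Mx k n, Fp q X = (∫⁻ z, q z) ^ k := by
  have hm : Measurable fun v : Fin n → ℝ => q (WithLp.toLp 2 v) :=
    hq.comp (PiLp.continuous_toLp 2 _).measurable
  have h := lintegral_pi_prod (volume : Measure (Fin n → ℝ)) k (fun _ v => q (WithLp.toLp 2 v)) (fun _ => hm)
  have h2 : ∫⁻ v : Fin n → ℝ, q (WithLp.toLp 2 v) = ∫⁻ z, q z :=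
    (PiLp.volume_preserving_toLp (Fin n)).lintegral_comp hq
  rw [Finset.prod_const, Finset.card_univ, Fintype.card_fin, h2] at h
  exact h

/-- the embedding `a ↦ g ι a` -/
def rot {k n : ℕ} (g : OG n) (a : Eucl k) : Eucl n := Matrix.toEuclideanLin ((g : Mx n n) * (Pm k n).transpose) a

lemma rot_eq {k n : ℕ} (hkn : k ≤ n) (g : OG n) (a : Eucl k) :
    rot g a = Matrix.toEuclideanLin (g : Mx n n) (iota hkn a) := by
  ext j
  change (((g : Mx n n) * (Pm k n).transpose).mulVec a.ofLp) j = ((g : Mx n n).mulVec ((Pm k n).transpose.mulVec a.ofLp)) j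
  rw [Matrix.mulVec_mulVec]

lemma rot_norm {k n : ℕ} (hkn : k ≤ n) (g : OG n) (a : Eucl k) : ‖rot g a‖ = ‖a‖ := by
  refine norm_toEuclideanLin _ ?_ a
  have h : (g : Mx n n).transpose * (g : Mx n n) = 1 := (Matrix.mem_orthogonalGroup_iff' (Fin n) ℝ).1 g.2
  rw [Matrix.transpose_mul, Matrix.transpose_transpose, Matrix.mul_assoc, ← Matrix.mul_assoc _ (g : Mx n n), h,
    Matrix.one_mul, Pm_mul_transpose hkn]

lemma measurable_rot {k n : ℕ} : Measurable fun z : OG n × Eucl k => rot z.1 z.2 := by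
  have hg : Continuous fun z : OG n × Eucl k => (z.1 : Mx n n) * (Pm k n).transpose :=
    (continuous_subtype_val.comp continuous_fst).matrix_mul continuous_const
  have h : Continuous fun z : OG n × Eucl k => rot z.1 z.2 := by
    refine (PiLp.continuous_toLp 2 _).comp (g := WithLp.toLp 2) (f := fun z : OG n × Eucl k => ((z.1 : Mx n n) * (Pm k n).transpose).mulVec z.2.ofLp) ?_
    exact hg.matrix_mulVec ((PiLp.continuous_ofLp 2 _).comp continuous_snd)
  exact h.measurable

lemma measurable_rot_right {k n : ℕ} (g : OG n) : Measurable fun a : Eucl k => rot g a :=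
  (LinearMap.continuous_of_finiteDimensional (Matrix.toEuclideanLin ((g : Mx n n) * (Pm k n).transpose))).measurable

lemma If_Fp {k n : ℕ} (p : ℕ) {q : Eucl n → ℝ≥0∞} (hq : Measurable q) (g : OG n) :
    If p (Fp q) (Pm k n * ((g⁻¹ : OG n) : Mx n n)) = Jf p (fun a : Eucl k => q (rot g a)) := by
  have hginv : ((g⁻¹ : OG n) : Mx n n) = (g : Mx n n).transpose := rfl
  have hmp : MeasurePreserving (fun x : Fin k → Eucl k => (fun i => (x i).ofLp : Fin k → Fin k → ℝ)) volume volume :=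
    volume_preserving_pi fun _ => PiLp.volume_preserving_ofLp (Fin k)
  have hc : Continuous fun A : Mx k k => A * (Pm k n * ((g⁻¹ : OG n) : Mx n n)) := by fun_prop
  have hm : Measurable fun A : Mx k k => Fp q (A * (Pm k n * ((g⁻¹ : OG n) : Mx n n))) * wt p A :=
    ((measurable_Fp hq).comp hc.measurable).mul (measurable_wt p)
  have h := hmp.lintegral_comp hm
  unfold If Jf
  refine Eq.trans h.symm ?_
  refine lintegral_congr fun x => ?_
  congr 1
  unfold Fp
  refine Finset.prod_congr rfl fun i _ => ?_
  congr 1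
  ext j
  change (((Matrix.of fun i => (x i).ofLp) * (Pm k n * ((g⁻¹ : OG n) : Mx n n)) : Mx k n) i) j =
    (((g : Mx n n) * (Pm k n).transpose).mulVec (x i).ofLp) j
  have e : (g : Mx n n) * (Pm k n).transpose = (Pm k n * ((g⁻¹ : OG n) : Mx n n)).transpose := by
    rw [hginv, Matrix.transpose_mul, Matrix.transpose_transpose]
  rw [e, Matrix.mul_apply, Matrix.mulVec, dotProduct]
  refine Finset.sum_congr rfl fun l _ => ?_
  rw [Matrix.transpose_apply, mul_comm]; rfl

lemma core {m n : ℕ} (hkn : m + 1 ≤ n) (ν : Measure (OG n)) [IsProbabilityMeasure ν] [ν.IsMulLeftInvariant]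
    {q : Eucl n → ℝ≥0∞} (hq : Measurable q) (hq1 : ∀ z, q z ≤ 1) :
    volume (Metric.closedBall (0 : Eucl n) 1) ^ (m+1) *
      ∫⁻ g, ((∫⁻ a : Eucl (m+1), q (rot g a)) / volume (Metric.closedBall (0 : Eucl (m+1)) 1)) ^ n ∂ν ≤
      (∫⁻ z, q z) ^ (m+1) := by
  obtain ⟨c, hc⟩ := BP hkn ν
  have key : ∀ q : Eucl n → ℝ≥0∞, Measurable q → (∫⁻ z, q z) ^ (m+1) =
      c * ∫⁻ g, Jf (n - (m+1)) (fun a : Eucl (m+1) => q (rot g a)) ∂ν := by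
    intro q hq
    have hI := measurable_If (n - (m+1)) (measurable_Fp (k := m+1) hq)
    have hgm : Measurable fun g : OG n => (g : Mx n n) := continuous_subtype_val.measurable
    have hcm : Continuous fun z : Mx n n => Pm (m+1) n * z := by fun_prop
    rw [← lintegral_Fp hq, hc _ (measurable_Fp hq),
      ← lintegral_inv_OG ν (fun g => If (n - (m+1)) (Fp q) (Pm (m+1) n * (g : Mx n n))) (hI.comp (hcm.measurable.comp hgm))]
    congr 1
    exact lintegral_congr fun g => If_Fp _ hq g
  set J1 := Jf (n - (m+1)) ((Metric.closedBall (0 : Eucl (m+1)) 1).indicator 1) with hJ1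
  have hball := key ((Metric.closedBall (0 : Eucl n) 1).indicator 1) (measurable_one.indicator measurableSet_closedBall)
  have e : ∀ g : OG n, (fun a : Eucl (m+1) => (Metric.closedBall (0 : Eucl n) 1).indicator (1 : Eucl n → ℝ≥0∞) (rot g a)) =
      (Metric.closedBall (0 : Eucl (m+1)) 1).indicator 1 := by
    intro g
    funext a
    simp only [indicator, Metric.mem_closedBall, dist_zero_right, rot_norm hkn, Pi.one_apply]
  simp_rw [e] at hball
  rw [lintegral_indicator_one measurableSet_closedBall, lintegral_const, measure_univ, mul_one, ← hJ1] at hball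
  rw [hball, key q hq, mul_assoc]
  gcongr
  have hL : Measurable fun g : OG n => ∫⁻ a : Eucl (m+1), q (rot g a) :=
    Measurable.lintegral_prod_right (hq.comp measurable_rot)
  rw [← lintegral_const_mul _ ((hL.div_const _).pow_const _)]
  refine lintegral_mono fun g => ?_
  have := busemann (m := m) (n - (m+1)) (hq.comp (measurable_rot_right g)) (fun z => hq1 _)
  rw [Nat.add_sub_cancel' hkn, mul_comm] at this
  exact this

end

end PartJ

section PartK
open MeasureTheory

noncomputable section

open Set Filter Topology
open scoped ENNReal

lemma grinberg_aux (n k : ℕ) (hk1 : 1 ≤ k) (hkn : k ≤ n) (f : Eucl n → ℝ) (hf : MemQ0 f)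
    (ν : Measure (OG n)) [IsProbabilityMeasure ν] [ν.IsMulLeftInvariant] :
    (∫ g : OG n, (∫ y : stdSubspace n k,
        f ((Matrix.toEuclideanLin (g : Matrix (Fin n) (Fin n) ℝ)) (y : Eucl n))) ^ n ∂ν)
      ≤ (ballVol k ^ n / ballVol n ^ k) * (∫ x, f x) ^ k * supNorm f ^ (n - k) := by
  obtain ⟨m, rfl⟩ : ∃ m, k = m + 1 := ⟨k - 1, by omega⟩
  have hbdd := memQ0_bdd hf
  obtain ⟨h0, hlc, husc, hfint, hpos⟩ := hf
  have hfm : Measurable f := husc.measurable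
  set M := supNorm f with hM
  have hle : ∀ x, f x ≤ M := fun x => le_ciSup hbdd x
  have hMpos : 0 < M := by
    by_contra hneg
    have : ∫ x, f x ≤ 0 := integral_nonpos fun x => (hle x).trans (not_lt.1 hneg)
    linarith
  set q : Eucl n → ℝ≥0∞ := fun z => ENNReal.ofReal (f z / M) with hq
  have hqm : Measurable q := (hfm.div_const M).ennreal_ofReal
  have hq1 : ∀ z, q z ≤ 1 := by
    intro z
    simp only [hq, ENNReal.ofReal_le_one]
    exact (div_le_one hMpos).2 (hle z)
  have hcore := core hkn ν hqm hq1
  set L : OG n → ℝ≥0∞ := fun g => ∫⁻ a : Eucl (m+1), q (rot g a) with hLdef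
  have hL : Measurable L := Measurable.lintegral_prod_right (hqm.comp measurable_rot)
  set ωn := volume (Metric.closedBall (0 : Eucl n) 1) with hωn
  set ωk := volume (Metric.closedBall (0 : Eucl (m+1)) 1) with hωk
  have hωn0 : ωn ≠ 0 := (Metric.measure_closedBall_pos _ _ (by norm_num)).ne'
  have hωnt : ωn ≠ ∞ := measure_closedBall_lt_top.ne
  have hωk0 : ωk ≠ 0 := (Metric.measure_closedBall_pos _ _ (by norm_num)).ne'
  have hωkt : ωk ≠ ∞ := measure_closedBall_lt_top.ne
  -- the section integral
  have hsec : ∀ g : OG n, (∫ y : stdSubspace n (m+1),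
      f ((Matrix.toEuclideanLin (g : Matrix (Fin n) (Fin n) ℝ)) (y : Eucl n))) = M * (L g).toReal := by
    intro g
    rw [integral_sub (iota hkn) _ (iota_range hkn) (fun x => f ((Matrix.toEuclideanLin (g : Matrix (Fin n) (Fin n) ℝ)) x))]
    simp_rw [← rot_eq hkn g]
    have hmg : Measurable fun a : Eucl (m+1) => f (rot g a) / M := (hfm.comp (measurable_rot_right g)).div_const M
    have e : ∫ a : Eucl (m+1), f (rot g a) / M = (L g).toReal :=
      integral_eq_lintegral_of_nonneg_ae (Eventually.of_forall fun a => div_nonneg (h0 _) hMpos.le)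
        hmg.aestronglyMeasurable
    rw [← e, integral_div, mul_div_cancel₀ _ hMpos.ne']
  simp_rw [hsec]
  have hLr : Measurable fun g => (M * (L g).toReal) ^ n := (hL.ennreal_toReal.const_mul M).pow_const n
  rw [integral_eq_lintegral_of_nonneg_ae (Eventually.of_forall fun g => by positivity) hLr.aestronglyMeasurable]
  have hIq : ∫⁻ z, q z = ENNReal.ofReal ((∫ x, f x) / M) := by
    rw [← integral_div, ofReal_integral_eq_lintegral_ofReal (hfint.div_const M)
      (Eventually.of_forall fun x => div_nonneg (h0 x) hMpos.le)]
  have hRHS : 0 ≤ (ballVol (m+1) ^ n / ballVol n ^ (m+1)) * (∫ x, f x) ^ (m+1) * M ^ (n - (m+1)) := by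
    unfold ballVol
    positivity
  refine ENNReal.toReal_le_of_le_ofReal hRHS ?_
  have h1 : ∫⁻ g, ENNReal.ofReal ((M * (L g).toReal) ^ n) ∂ν ≤
      ENNReal.ofReal M ^ n * ωk ^ n * ∫⁻ g, (L g / ωk) ^ n ∂ν := by
    rw [← lintegral_const_mul _ ((hL.div_const _).pow_const _)]
    refine lintegral_mono fun g => ?_
    rw [ENNReal.ofReal_pow (by positivity), ENNReal.ofReal_mul hMpos.le, ← mul_pow, ← mul_pow, mul_assoc,
      ENNReal.mul_div_cancel hωk0 hωkt]
    gcongr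
    exact ENNReal.ofReal_toReal_le
  refine h1.trans ?_
  have h2 : ∫⁻ g, (L g / ωk) ^ n ∂ν ≤ (∫⁻ z, q z) ^ (m+1) / ωn ^ (m+1) := by
    rw [ENNReal.le_div_iff_mul_le (Or.inl (pow_ne_zero _ hωn0)) (Or.inl (ENNReal.pow_ne_top hωnt)), mul_comm]
    exact hcore
  refine (mul_le_mul_right h2 _).trans ?_
  have hk' : ωk = ENNReal.ofReal (ballVol (m+1)) := (ENNReal.ofReal_toReal hωkt).symm
  have hn' : ωn = ENNReal.ofReal (ballVol n) := (ENNReal.ofReal_toReal hωnt).symm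
  have hbn : 0 < ballVol n := ENNReal.toReal_pos hωn0 hωnt
  have hbk : 0 < ballVol (m+1) := ENNReal.toReal_pos hωk0 hωkt
  rw [hIq, hk', hn', ← ENNReal.ofReal_pow hMpos.le, ← ENNReal.ofReal_pow hbk.le, ← ENNReal.ofReal_pow hbn.le,
    ← ENNReal.ofReal_pow (by positivity), ← ENNReal.ofReal_div_of_pos (by positivity),
    ← ENNReal.ofReal_mul (by positivity), ← ENNReal.ofReal_mul (by positivity)]
  apply le_of_eq
  congr 1
  obtain ⟨d, hd⟩ := Nat.exists_eq_add_of_le hkn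
  have hd' : n - (m+1) = d := by omega
  have hMn : M ^ n = M ^ (m+1) * M ^ d := by rw [← pow_add, ← hd]
  rw [hd', hMn, div_pow]
  field_simp

end

end PartK

/-- **The functional analog of Grinberg's inequality** (Theorem 5.1):
for `f ∈ Q₀ⁿ` and `1 ≤ k ≤ n`,
`∫_{O(n)} (∫_{H₀ᵏ} f(gy) dλ_k(y))ⁿ dν(g) ≤ (ω_kⁿ/ω_nᵏ)·‖f‖₁ᵏ·‖f‖_∞^{n−k}`,
where `ν` is the Haar probability measure on `O(n)`. -/
theorem functional_grinberg (n k : ℕ) (hk1 : 1 ≤ k) (hkn : k ≤ n)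
    (f : Eucl n → ℝ) (hf : MemQ0 f)
    (ν : Measure (OG n)) [IsProbabilityMeasure ν] [ν.IsMulLeftInvariant] :
    (∫ g : OG n,
        (∫ y : stdSubspace n k,
          f ((Matrix.toEuclideanLin (g : Matrix (Fin n) (Fin n) ℝ))
              (y : Eucl n))) ^ n ∂ν) ≤
      (ballVol k ^ n / ballVol n ^ k) * (∫ x, f x) ^ k * supNorm f ^ (n - k) := by
  exact grinberg_aux n k hk1 hkn f hf ν
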